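/- arXiv:1010.0382 — 2 statements merged into one kernel-verified Lean document; each statement's English description precedes it below -/
import Mathlib

section
/- Let n : ℕ and R : Finset (FreeGroup (Fin n)) be a finite set of relators. Suppose there exists a computable function f : ℕ → ℕ (Computable f) such that every w ∈ Subgroup.normalClosure (↑R) can be written as an ordered product w = ∏_{i=1}^{m} cᵢ⁻¹ · rᵢ^{εᵢ} · cᵢ with m ≤ f ((FreeGroup.toWord w).length), where each cᵢ ∈ FreeGroup (Fin n), each rᵢ ∈ R and each εᵢ ∈ {1, -1}. Then the word problem for the finitely presented group ⟨Fin n; R⟩ is decidable: ComputablePred (fun l : List (Fin n × Bool) => FreeGroup.mk l ∈ Subgroup.normalClosure (↑R)). (Equivalently, if the word problem is recursively unsolvable, then the number of conjugates of relators needed to express trivial words of length at most N — the isoperimetric function — is not bounded by any recursive function of N.) -/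
/-!
A product of `m` conjugates of relators is the boundary label of a planar diagram with `m` cells.
Having such a diagram is preserved by moving the base point along the boundary and by cancelling
inverse letters, so the reduced word of the product bounds a diagram with at most `m` cells as well.
Cells on the boundary of a diagram can be cut off one at a time, which amounts to inserting a
relator, a cyclic permutation of one, or the inverse of one at some position of the word. Hence a
reduced word `w` is trivial in the group if and only if at most `f |w|` such insertions make it
trivial in the free group. No conjugating elements have to be guessed, so this is a finite search.
-/

section DiscDiagrams

open FreeGroup

variable {α : Type*} {T : Set (List (α × Bool))} {j k : ℕ}

/-- `BoundsDiagram T j w`: the word `w` labels the boundary of a planar disc diagram having at most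
`j` cells, all with boundary label in `T`. The diagram is encoded by what happens at the first
letter of its boundary: either that edge occurs a second time, in the opposite direction, along the
boundary and splits the diagram in two (`edge`), or it lies on a cell, which is removed (`face`). -/
inductive BoundsDiagram (T : Set (List (α × Bool))) : ℕ → List (α × Bool) → Prop
  | nil (j : ℕ) : BoundsDiagram T j []
  | edge {j k : ℕ} {x : α × Bool} {u v : List (α × Bool)} :
      BoundsDiagram T j u → BoundsDiagram T k v →
        BoundsDiagram T (j + k) (x :: (u ++ (x.1, !x.2) :: v))
  | face {j : ℕ} {x : α × Bool} {y w : List (α × Bool)} :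
      x :: y ∈ T → BoundsDiagram T j (invRev y ++ w) → BoundsDiagram T (j + 1) (x :: w)

/-- A set of words is symmetrized if it is closed under cyclic permutation and formal inversion. -/
structure IsSymmetrized (T : Set (List (α × Bool))) : Prop where
  append_comm_mem : ∀ {a b : List (α × Bool)}, a ++ b ∈ T → b ++ a ∈ T
  invRev_mem : ∀ {a : List (α × Bool)}, a ∈ T → invRev a ∈ T

theorem append_eq_append_cons_cases {β : Type*} {p q u v : List β} {x : β}
    (h : p ++ q = u ++ x :: v) :
    (∃ c, p = u ++ x :: c ∧ v = c ++ q) ∨ ∃ c, u = p ++ c ∧ q = c ++ x :: v := by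
  rcases List.append_eq_append_iff.1 h with ⟨c, hu, hq⟩ | ⟨c, hp, hc⟩
  · exact .inr ⟨c, hu, hq⟩
  · rcases List.cons_eq_append_iff.1 hc with ⟨rfl, rfl⟩ | ⟨d, rfl, hv⟩
    · exact .inr ⟨[], by simpa using hp.symm, rfl⟩
    · exact .inl ⟨d, hp, hv⟩

namespace BoundsDiagram

variable {u v w q a b s : List (α × Bool)} {x : α × Bool}

theorem mono (h : BoundsDiagram T j w) (hjk : j ≤ k) : BoundsDiagram T k w := by
  induction h generalizing k with
  | nil => exact nil k
  | @edge i j x u v hu _ _ ihv =>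
    obtain ⟨d, rfl⟩ := Nat.exists_eq_add_of_le hjk
    rw [add_assoc]
    exact edge hu (ihv (j.le_add_right d))
  | face hT _ ih =>
    obtain ⟨d, rfl⟩ := Nat.exists_eq_add_of_le hjk
    rw [add_right_comm]
    exact face hT (ih (Nat.le_add_right _ d))

theorem append (hu : BoundsDiagram T j u) (hv : BoundsDiagram T k v) :
    BoundsDiagram T (j + k) (u ++ v) := by
  induction hu with
  | nil j => exact hv.mono (Nat.le_add_left k j)
  | edge hu' _ _ ih => simpa [add_assoc] using edge hu' ih
  | face hT _ ih =>
    rw [add_right_comm]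
    exact face hT (by simpa using ih)

theorem conj (hu : BoundsDiagram T j u) (b : List (α × Bool)) :
    BoundsDiagram T j (invRev b ++ (u ++ b)) := by
  induction b generalizing u with
  | nil => simpa using hu
  | cons x b ih => simpa [invRev] using ih (edge (x := (x.1, !x.2)) hu (nil 0))

theorem replace_word (hs : BoundsDiagram T j s) (hbs : b ++ invRev s ∈ T) :
    BoundsDiagram T (j + 1) b := by
  cases b with
  | nil => exact nil _
  | cons x b => exact face hbs (by simpa using hs.append ((nil 0).conj b))

theorem replace_suffix_of_edge (hT : IsSymmetrized T) (hu : BoundsDiagram T j (s ++ q))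
    (hv : BoundsDiagram T k v) (hbs : b ++ invRev (s ++ (x.1, !x.2) :: v) ∈ T) :
    BoundsDiagram T (j + k + 1) (x :: (q ++ b)) := by
  have hx : x :: (invRev s ++ (b ++ invRev v)) ∈ T := by
    have hrot := hT.append_comm_mem (a := b ++ invRev v) (b := x :: invRev s)
      (by simpa [invRev] using hbs)
    simpa using hrot
  have hdiag : BoundsDiagram T (j + k) (v ++ (invRev b ++ ((s ++ q) ++ b))) :=
    add_comm j k ▸ hv.append (hu.conj b)
  exact face hx (by simpa using hdiag)

/-- Rotating a diagram with `j + 1` cells uses this lemma for `j` cells, which is why rotation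
appears here as a hypothesis for at most `j` cells. -/
theorem replace_suffix (hT : IsSymmetrized T)
    (hrot : ∀ i ≤ j, ∀ a b, BoundsDiagram T i (a ++ b) → BoundsDiagram T i (b ++ a))
    (hqs : BoundsDiagram T j (q ++ s)) (hbs : b ++ invRev s ∈ T) :
    BoundsDiagram T (j + 1) (q ++ b) := by
  generalize hw : q ++ s = w at hqs
  induction hqs generalizing q with
  | nil j =>
    obtain ⟨rfl, rfl⟩ := List.append_eq_nil_iff.1 hw
    exact replace_word (nil j) hbs
  | @edge i k x u v hu hv _ ihv =>
    rcases List.cons_eq_append_iff.1 hw.symm with ⟨rfl, rfl⟩ | ⟨q, rfl, huv⟩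
    · exact replace_word (edge hu hv) hbs
    rcases append_eq_append_cons_cases huv.symm with ⟨c, rfl, rfl⟩ | ⟨c, rfl, rfl⟩
    · have hcb := ihv (fun l hl => hrot l (hl.trans (Nat.le_add_left k i))) rfl
      simpa [add_assoc] using edge hu hcb
    · exact replace_suffix_of_edge hT (hrot i (Nat.le_add_right i k) _ _ hu) hv hbs
  | @face i x y w hxy hyw ih =>
    rcases List.cons_eq_append_iff.1 hw.symm with ⟨rfl, rfl⟩ | ⟨q, rfl, rfl⟩
    · exact replace_word (face hxy hyw) hbs
    have hyqb : BoundsDiagram T (i + 1) (invRev y ++ q ++ b) :=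
      ih (fun l hl => hrot l (hl.trans i.le_succ)) (List.append_assoc _ _ _)
    exact face hxy (by simpa using hyqb)

theorem rotate (hT : IsSymmetrized T) (h : BoundsDiagram T j (a ++ b)) :
    BoundsDiagram T j (b ++ a) := by
  induction j using Nat.strong_induction_on generalizing a b with
  | _ j ihj =>
  induction a generalizing b with
  | nil => simpa using h
  | cons x a iha =>
    suffices BoundsDiagram T j (a ++ (b ++ [x])) by simpa using iha this
    rw [← List.append_assoc]
    generalize hw : x :: a ++ b = w at h
    cases h with
    | nil => simp at hw
    | @edge i k x' u v hu hv =>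
      obtain ⟨rfl, hab⟩ := List.cons.inj hw
      have hvx : BoundsDiagram T k ((x.1, !x.2) :: (v ++ [x])) := by
        simpa using edge (x := (x.1, !x.2)) hv (nil 0)
      rw [show a ++ b = u ++ (x.1, !x.2) :: v from hab]
      simpa using hu.append hvx
    | @face i x' y w hxy hy =>
      obtain ⟨rfl, rfl⟩ := List.cons.inj hw
      exact replace_suffix hT (fun l hl _ _ => ihj l (Nat.lt_succ_of_le hl))
        (ihj i i.lt_succ_self hy) (by simpa using hxy)

theorem of_cancel_head (hT : IsSymmetrized T)
    (h : BoundsDiagram T j (x :: (x.1, !x.2) :: w)) : BoundsDiagram T j w := by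
  generalize hw : x :: (x.1, !x.2) :: w = w' at h
  cases h with
  | nil => simp at hw
  | @edge i k x' u v hu hv =>
    obtain ⟨rfl, huv⟩ := List.cons.inj hw
    rcases List.cons_eq_append_iff.1 huv with ⟨rfl, hv'⟩ | ⟨u, rfl, rfl⟩
    · obtain ⟨-, rfl⟩ := List.cons.inj hv'
      exact hv.mono (Nat.le_add_left k i)
    · simpa using (rotate hT (a := [_]) hu).append hv
  | @face i x' y w' hxy hy =>
    obtain ⟨rfl, rfl⟩ := List.cons.inj hw
    have hyw : BoundsDiagram T i (w ++ invRev (x :: y)) :=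
      rotate hT (by simpa [invRev] using hy)
    simpa using replace_suffix hT (fun _ _ _ _ => rotate hT) hyw (b := []) (by simpa using hxy)

theorem of_red (hT : IsSymmetrized T) (hvw : Red v w) (hv : BoundsDiagram T j v) :
    BoundsDiagram T j w := by
  induction hvw with
  | refl => exact hv
  | tail _ hstep ih =>
    cases hstep with
    | @not p q x b =>
      have hqp : BoundsDiagram T j (q ++ p) :=
        of_cancel_head hT (x := (x, b)) (by simpa using rotate hT ih)
      exact rotate hT hqp

theorem of_mem (hs : s ∈ T) : BoundsDiagram T 1 s :=
  replace_word (nil 0) (by simpa using hs)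

theorem exists_mk_eq_prod {L : List (FreeGroup α)}
    (hL : ∀ g ∈ L, ∃ w, BoundsDiagram T 1 w ∧ FreeGroup.mk w = g) :
    ∃ w, BoundsDiagram T L.length w ∧ FreeGroup.mk w = L.prod := by
  induction L with
  | nil => exact ⟨[], nil 0, one_eq_mk.symm⟩
  | cons g L ih =>
    obtain ⟨⟨u, hu, hug⟩, hL⟩ := List.forall_mem_cons.1 hL
    obtain ⟨v, hv, hvL⟩ := ih hL
    refine ⟨u ++ v, ?_, by rw [← mul_mk, hug, hvL, List.prod_cons]⟩
    rw [List.length_cons, add_comm]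
    exact hu.append hv

end BoundsDiagram

end DiscDiagrams

section Insertions

open FreeGroup

variable {α : Type*} {T : Set (List (α × Bool))} {j k : ℕ} {a b u w : List (α × Bool)}

/-- `InsertionTrivial T j w`: inserting at most `j` words from `T`, one after the other and at
arbitrary positions, turns `w` into a word that is trivial in the free group. Unlike
`BoundsDiagram`, this can be tested by a finite search. -/
inductive InsertionTrivial (T : Set (List (α × Bool))) : ℕ → List (α × Bool) → Prop
  | of_mk_eq_one {j : ℕ} {w : List (α × Bool)} : FreeGroup.mk w = 1 → InsertionTrivial T j w
  | insert {j : ℕ} {p t q : List (α × Bool)} :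
      t ∈ T → InsertionTrivial T j (p ++ (t ++ q)) → InsertionTrivial T (j + 1) (p ++ q)

namespace InsertionTrivial

theorem succ (h : InsertionTrivial T j w) : InsertionTrivial T (j + 1) w := by
  induction h with
  | of_mk_eq_one hw => exact of_mk_eq_one hw
  | insert ht _ ih => exact insert ht ih

theorem append_append_of_mk_eq_one (hu : FreeGroup.mk u = 1) (h : InsertionTrivial T j (a ++ b)) :
    InsertionTrivial T j (a ++ (u ++ b)) := by
  generalize hw : a ++ b = w at h
  induction h generalizing a b with
  | of_mk_eq_one hab =>
    subst hw
    refine of_mk_eq_one ?_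
    rwa [← mul_mk, ← mul_mk, hu, one_mul, mul_mk]
  | @insert j p t q ht _ ih =>
    rcases List.append_eq_append_iff.1 hw with ⟨c, rfl, rfl⟩ | ⟨c, rfl, rfl⟩
    · have hpq := insert (p := a ++ (u ++ c)) ht
        (by simpa using ih (a := a) (b := c ++ (t ++ q)) (by simp))
      simpa using hpq
    · have hpq := insert (p := p) (q := c ++ (u ++ b)) ht
        (by simpa using ih (a := p ++ (t ++ c)) (b := b) (by simp))
      simpa using hpq

theorem append_append (hu : InsertionTrivial T j u) (hab : InsertionTrivial T k (a ++ b)) :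
    InsertionTrivial T (j + k) (a ++ (u ++ b)) := by
  induction hu with
  | @of_mk_eq_one j u hu =>
    induction j with
    | zero => simpa using append_append_of_mk_eq_one hu hab
    | succ j ih => simpa [add_right_comm] using ih.succ
  | @insert j p t q ht _ ih =>
    have hpq := insert (p := a ++ p) (q := q ++ b) ht (by simpa using ih)
    simpa [add_right_comm] using hpq

theorem mk_mem {N : Subgroup (FreeGroup α)} [hN : N.Normal] (hT : ∀ t ∈ T, FreeGroup.mk t ∈ N)
    (h : InsertionTrivial T j w) : FreeGroup.mk w ∈ N := by
  induction h with
  | of_mk_eq_one hw => exact hw ▸ one_mem N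
  | @insert _ p t _ ht _ ih =>
    have hconj := hN.conj_mem _ (inv_mem (hT t ht)) (FreeGroup.mk p)
    convert mul_mem hconj ih using 1
    simp only [← mul_mk]
    group

end InsertionTrivial

theorem mk_pair_not_eq_one (x : α × Bool) : FreeGroup.mk [x, (x.1, !x.2)] = 1 :=
  Quot.sound (Red.Step.not (L₁ := []) (L₂ := []))

theorem BoundsDiagram.insertionTrivial (hT : IsSymmetrized T) (h : BoundsDiagram T j w) :
    InsertionTrivial T j w := by
  induction h with
  | nil j => exact .of_mk_eq_one one_eq_mk.symm
  | @edge j k x u v _ _ ihu ihv =>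
    have hxv : InsertionTrivial T k ([x] ++ ((x.1, !x.2) :: v)) :=
      ihv.append_append_of_mk_eq_one (a := []) (mk_pair_not_eq_one x)
    exact ihu.append_append hxv
  | @face j x y w hxy _ ih =>
    refine .insert (p := []) (hT.invRev_mem hxy) ?_
    simpa [invRev] using ih.append_append_of_mk_eq_one (mk_pair_not_eq_one (x.1, !x.2))

end Insertions

section Search

open FreeGroup

variable {α : Type*}

/-- The words obtained from `w` by at most one insertion of a word from `T`. -/
noncomputable def insertions (T : Finset (List (α × Bool))) (w : List (α × Bool)) :
    List (List (α × Bool)) :=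
  w :: (List.range (w.length + 1)).flatMap fun i =>
    T.toList.map fun t => w.take i ++ (t ++ w.drop i)

theorem mem_insertions {T : Finset (List (α × Bool))} {w w' : List (α × Bool)} :
    w' ∈ insertions T w ↔ w' = w ∨ ∃ p q, w = p ++ q ∧ ∃ t ∈ T, w' = p ++ (t ++ q) := by
  simp only [insertions, List.mem_cons, List.mem_flatMap, List.mem_range, List.mem_map,
    Finset.mem_toList]
  refine or_congr_right ⟨?_, ?_⟩
  · rintro ⟨i, -, t, ht, rfl⟩
    exact ⟨w.take i, w.drop i, (List.take_append_drop i w).symm, t, ht, rfl⟩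
  · rintro ⟨p, q, rfl, t, ht, rfl⟩
    exact ⟨p.length, by simp, t, ht, by simp⟩

theorem insertionTrivial_succ_iff {T : Finset (List (α × Bool))} {j : ℕ} {w : List (α × Bool)} :
    InsertionTrivial (T : Set (List (α × Bool))) (j + 1) w ↔
      ∃ w' ∈ insertions T w, InsertionTrivial (T : Set (List (α × Bool))) j w' := by
  constructor
  · rintro (hw | ⟨ht, h⟩)
    · exact ⟨w, mem_insertions.2 (.inl rfl), .of_mk_eq_one hw⟩
    · exact ⟨_, mem_insertions.2 (.inr ⟨_, _, rfl, _, ht, rfl⟩), h⟩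
  · rintro ⟨w', hw', h⟩
    rcases mem_insertions.1 hw' with rfl | ⟨p, q, rfl, t, ht, rfl⟩
    · exact h.succ
    · exact .insert ht h

theorem exists_mem_insertionTrivial_iff {T : Finset (List (α × Bool))} {j : ℕ}
    {S : List (List (α × Bool))} :
    (∃ w ∈ S, InsertionTrivial (T : Set (List (α × Bool))) j w) ↔
      ∃ w ∈ (List.flatMap (insertions T))^[j] S, FreeGroup.mk w = 1 := by
  induction j generalizing S with
  | zero =>
    refine exists_congr fun w => and_congr_right fun _ => ⟨?_, .of_mk_eq_one⟩
    rintro ⟨hw⟩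
    exact hw
  | succ j ih =>
    rw [Function.iterate_succ_apply, ← ih]
    simp only [insertionTrivial_succ_iff, List.mem_flatMap]
    tauto

variable [Primcodable α]

theorem primrec_insertions (T : Finset (List (α × Bool))) : Primrec (insertions T) := by
  refine Primrec.list_cons.comp Primrec.id (Primrec.list_flatMap
    (Primrec.list_range.comp (Primrec.succ.comp Primrec.list_length))
    (Primrec.list_map (Primrec.const T.toList) ?_))
  have hw : Primrec fun a : (List (α × Bool) × ℕ) × List (α × Bool) => a.1.1 :=
    Primrec.fst.comp Primrec.fst
  have hi : Primrec fun a : (List (α × Bool) × ℕ) × List (α × Bool) => a.1.2 :=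
    Primrec.snd.comp Primrec.fst
  exact Primrec.list_append.comp (Primrec.list_take.comp hi hw)
    (Primrec.list_append.comp Primrec.snd (Primrec.list_drop.comp hi hw))

theorem primrec_reduce [DecidableEq α] :
    Primrec (reduce : List (α × Bool) → List (α × Bool)) := by
  let W := List (α × Bool)
  have hx : Primrec fun a : (W × (α × Bool) × W × W) × (α × Bool) × W => a.1.2.1 :=
    Primrec.fst.comp (Primrec.snd.comp Primrec.fst)
  have hy : Primrec fun a : (W × (α × Bool) × W × W) × (α × Bool) × W => a.2.1 :=
    Primrec.fst.comp Primrec.snd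
  have hw : Primrec fun a : (W × (α × Bool) × W × W) × (α × Bool) × W => a.2.2 :=
    Primrec.snd.comp Primrec.snd
  have hcancel : PrimrecPred fun a : (W × (α × Bool) × W × W) × (α × Bool) × W =>
      a.1.2.1.1 = a.2.1.1 ∧ a.1.2.1.2 = !a.2.1.2 :=
    (Primrec.eq.comp (Primrec.fst.comp hx) (Primrec.fst.comp hy)).and
      (Primrec.eq.comp (Primrec.snd.comp hx) (Primrec.not.comp (Primrec.snd.comp hy)))
  have hstep : Primrec fun a : (W × (α × Bool) × W × W) × (α × Bool) × W =>
      if a.1.2.1.1 = a.2.1.1 ∧ a.1.2.1.2 = !a.2.1.2 then a.2.2 else a.1.2.1 :: a.2.1 :: a.2.2 :=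
    Primrec.ite hcancel hw (Primrec.list_cons.comp hx (Primrec.list_cons.comp hy hw))
  exact Primrec.list_rec Primrec.id (Primrec.const []) (Primrec.list_casesOn
    (Primrec.snd.comp (Primrec.snd.comp Primrec.snd))
    (Primrec.list_cons.comp (Primrec.fst.comp Primrec.snd) (Primrec.const []))
    hstep.to₂).to₂

theorem primrecPred_mk_eq_one :
    PrimrecPred fun w : List (α × Bool) => FreeGroup.mk w = 1 := by
  classical
  refine (Primrec.eq.comp primrec_reduce (Primrec.const [])).of_eq fun w => ?_
  rw [← toWord_mk, toWord_eq_nil_iff]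

theorem primrecPred_insertionTrivial (T : Finset (List (α × Bool))) :
    PrimrecPred fun a : ℕ × List (α × Bool) =>
      InsertionTrivial (T : Set (List (α × Bool))) a.1 a.2 := by
  have hsearch : Primrec fun a : ℕ × List (α × Bool) =>
      (List.flatMap (insertions T))^[a.1] [a.2] :=
    Primrec.nat_iterate Primrec.fst (Primrec.list_cons.comp Primrec.snd (Primrec.const []))
      (Primrec.list_flatMap Primrec.snd ((primrec_insertions T).comp Primrec.snd))
  refine (primrecPred_mk_eq_one.exists_mem_list.comp hsearch).of_eq fun a => ?_
  simp [← exists_mem_insertionTrivial_iff]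

end Search

section Presentations

open FreeGroup

variable {α : Type*}

theorem mk_mem_iff_of_isRotated {N : Subgroup (FreeGroup α)} [hN : N.Normal]
    {a b : List (α × Bool)} (h : a ~r b) : FreeGroup.mk a ∈ N ↔ FreeGroup.mk b ∈ N := by
  obtain ⟨k, rfl⟩ := h
  rw [List.rotate_eq_drop_append_take_mod, ← mul_mk, hN.mem_comm_iff, mul_mk,
    List.take_append_drop]

variable [DecidableEq α]

/-- The cyclic permutations of the reduced words representing the elements of `R` and their
inverses. The elements of `R` need not be cyclically reduced, so these words need not be reduced. -/
def symmetrizedRelators (R : Finset (FreeGroup α)) : Finset (List (α × Bool)) :=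
  R.biUnion fun r => r.toWord.cyclicPermutations.toFinset ∪
    (invRev r.toWord).cyclicPermutations.toFinset

variable {R : Finset (FreeGroup α)}

theorem mem_symmetrizedRelators {w : List (α × Bool)} :
    w ∈ symmetrizedRelators R ↔ ∃ r ∈ R, w ~r r.toWord ∨ w ~r invRev r.toWord := by
  simp [symmetrizedRelators, List.mem_cyclicPermutations_iff]

theorem isSymmetrized_symmetrizedRelators :
    IsSymmetrized (symmetrizedRelators R : Set (List (α × Bool))) where
  append_comm_mem h := by
    simp only [Finset.mem_coe, mem_symmetrizedRelators] at h ⊢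
    obtain ⟨r, hr, h⟩ := h
    exact ⟨r, hr, h.imp List.isRotated_append.trans List.isRotated_append.trans⟩
  invRev_mem h := by
    simp only [Finset.mem_coe, mem_symmetrizedRelators] at h ⊢
    have invRev_isRotated {a b : List (α × Bool)} (hab : a ~r b) : invRev a ~r invRev b :=
      (hab.map _).reverse
    obtain ⟨r, hr, h | h⟩ := h
    · exact ⟨r, hr, .inr (invRev_isRotated h)⟩
    · exact ⟨r, hr, .inl (by simpa using invRev_isRotated h)⟩

theorem mk_mem_normalClosure_of_mem_symmetrizedRelators {t : List (α × Bool)}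
    (ht : t ∈ symmetrizedRelators R) :
    FreeGroup.mk t ∈ Subgroup.normalClosure (R : Set (FreeGroup α)) := by
  obtain ⟨r, hr, h⟩ := mem_symmetrizedRelators.1 ht
  have hrN : r ∈ Subgroup.normalClosure (R : Set (FreeGroup α)) :=
    Subgroup.subset_normalClosure hr
  rcases h with h | h
  · rwa [mk_mem_iff_of_isRotated h, mk_toWord]
  · rwa [mk_mem_iff_of_isRotated h, ← inv_mk, mk_toWord, inv_mem_iff]

theorem exists_mem_symmetrizedRelators_mk_eq_zpow {r : FreeGroup α} {ε : ℤ} (hr : r ∈ R)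
    (hε : ε = 1 ∨ ε = -1) : ∃ t ∈ symmetrizedRelators R, FreeGroup.mk t = r ^ ε := by
  rcases hε with rfl | rfl
  · exact ⟨r.toWord, mem_symmetrizedRelators.2 ⟨r, hr, .inl (.refl _)⟩, by
      rw [mk_toWord, zpow_one]⟩
  · exact ⟨invRev r.toWord, mem_symmetrizedRelators.2 ⟨r, hr, .inr (.refl _)⟩, by
      rw [← inv_mk, mk_toWord, zpow_neg_one]⟩

theorem boundsDiagram_toWord_prod_conj {m : ℕ} {c r : Fin m → FreeGroup α} {ε : Fin m → ℤ}
    (hr : ∀ i, r i ∈ R) (hε : ∀ i, ε i = 1 ∨ ε i = -1) :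
    BoundsDiagram (symmetrizedRelators R : Set (List (α × Bool))) m
      (toWord (List.ofFn fun i => (c i)⁻¹ * r i ^ ε i * c i).prod) := by
  have hconj : ∀ g ∈ List.ofFn fun i => (c i)⁻¹ * r i ^ ε i * c i, ∃ w,
      BoundsDiagram (symmetrizedRelators R : Set (List (α × Bool))) 1 w ∧
        FreeGroup.mk w = g := by
    refine List.forall_mem_ofFn_iff.2 fun i => ?_
    obtain ⟨t, ht, htr⟩ := exists_mem_symmetrizedRelators_mk_eq_zpow (hr i) (hε i)
    refine ⟨invRev (c i).toWord ++ (t ++ (c i).toWord), (BoundsDiagram.of_mem ht).conj _, ?_⟩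
    rw [← mul_mk, ← mul_mk, ← inv_mk, mk_toWord, htr, mul_assoc]
  obtain ⟨w, hw, hw_prod⟩ := BoundsDiagram.exists_mk_eq_prod hconj
  rw [List.length_ofFn] at hw
  rw [← hw_prod, toWord_mk]
  exact hw.of_red isSymmetrized_symmetrizedRelators reduce.red

end Presentations

theorem word_problem_decidable_of_computable_isoperimetric_bound_general
    {α : Type*} [Primcodable α] [DecidableEq α] (R : Finset (FreeGroup α))
    (h : ∃ f : ℕ → ℕ, Computable f ∧
      ∀ w ∈ Subgroup.normalClosure (↑R : Set (FreeGroup α)),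
        ∃ m : ℕ, m ≤ f (FreeGroup.toWord w).length ∧
          ∃ c r : Fin m → FreeGroup α, ∃ ε : Fin m → ℤ,
            (∀ i, r i ∈ R) ∧ (∀ i, ε i = 1 ∨ ε i = -1) ∧
            w = (List.ofFn (fun i : Fin m => (c i)⁻¹ * (r i) ^ (ε i) * c i)).prod) :
    ComputablePred (fun l : List (α × Bool) =>
      FreeGroup.mk l ∈ Subgroup.normalClosure (↑R : Set (FreeGroup α))) := by
  obtain ⟨f, hf, hfR⟩ := h
  have hreduce : Computable (FreeGroup.reduce : List (α × Bool) → List (α × Bool)) :=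
    primrec_reduce.to_comp
  have hsearch := (primrecPred_insertionTrivial (symmetrizedRelators R)).computablePred
  refine ComputablePred.computable_of_manyOneReducible
    ⟨fun l => (f (FreeGroup.reduce l).length, FreeGroup.reduce l),
      (hf.comp (Computable.list_length.comp hreduce)).pair hreduce,
      fun l => ⟨fun hl => ?_, fun hl => ?_⟩⟩
    hsearch
  · obtain ⟨m, hm, c, r, ε, hr, hε, hprod⟩ := hfR _ hl
    have hdiagram := boundsDiagram_toWord_prod_conj (c := c) hr hε
    rw [← hprod] at hdiagram
    exact (hdiagram.mono hm).insertionTrivial isSymmetrized_symmetrizedRelators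
  · have hmem : FreeGroup.mk (FreeGroup.reduce l) ∈
        Subgroup.normalClosure (R : Set (FreeGroup α)) :=
      hl.mk_mem fun _ => mk_mem_normalClosure_of_mem_symmetrizedRelators
    rwa [FreeGroup.reduce.self] at hmem

/-- If the isoperimetric function of a finite presentation `⟨Fin n; R⟩` is bounded
by a computable function (of the length of the reduced word), then the word problem
of the presented group is decidable. -/
theorem word_problem_decidable_of_computable_isoperimetric_bound
    (n : ℕ) (R : Finset (FreeGroup (Fin n)))
    (h : ∃ f : ℕ → ℕ, Computable f ∧
      ∀ w ∈ Subgroup.normalClosure (↑R : Set (FreeGroup (Fin n))),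
        ∃ m : ℕ, m ≤ f (FreeGroup.toWord w).length ∧
          ∃ c r : Fin m → FreeGroup (Fin n), ∃ ε : Fin m → ℤ,
            (∀ i, r i ∈ R) ∧ (∀ i, ε i = 1 ∨ ε i = -1) ∧
            w = (List.ofFn (fun i : Fin m => (c i)⁻¹ * (r i) ^ (ε i) * c i)).prod) :
    ComputablePred (fun l : List (Fin n × Bool) =>
      FreeGroup.mk l ∈ Subgroup.normalClosure (↑R : Set (FreeGroup (Fin n)))) :=
  word_problem_decidable_of_computable_isoperimetric_bound_general R h
end

section
/- (Chiodo) There is no general procedure to pick a non-trivial generator from a finite presentation of a non-trivial group: there is no computable function g : ℕ × List (List (ℕ × Bool)) → ℕ such that for every encoded finite presentation P = (n, L) whose presented group G_P is nontrivial, one has g P < n and π_P (FreeGroup.of (g P)) ≠ 1 in G_P. -/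
/-- The set of relators of the finite presentation encoded by
`P = (n, L) : ℕ × List (List (ℕ × Bool))`: the words in `L`, together with all
generators `FreeGroup.of i` for `i ≥ n`. -/
def presRels (P : ℕ × List (List (ℕ × Bool))) : Set (FreeGroup ℕ) :=
  {r | ∃ w ∈ P.2, r = FreeGroup.mk w} ∪ {r | ∃ i : ℕ, P.1 ≤ i ∧ r = FreeGroup.of i}

/-- The group presented by an encoded finite presentation. -/
def presGroup (P : ℕ × List (List (ℕ × Bool))) : Type :=
  PresentedGroup (presRels P)

instance (P : ℕ × List (List (ℕ × Bool))) : Group (presGroup P) :=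
  inferInstanceAs (Group (PresentedGroup (presRels P)))

/-- The canonical projection from the free group to the presented group. -/
def presProj (P : ℕ × List (List (ℕ × Bool))) : FreeGroup ℕ →* presGroup P :=
  PresentedGroup.mk (presRels P)

/-!
Let `A₀` and `A₁` be the sets of codes of partial recursive functions that take the value `0`,
respectively `1`, at their own code. They are disjoint and recursively enumerable, and no computable
set separates them. Following Adian and Rabin, one computes from `n` two finite presentations that
present the trivial group precisely if `n ∈ A₀`, respectively `n ∈ A₁`. Their free product is
nontrivial for every `n`, and a nontrivial generator lies in the first factor only if `n ∉ A₀` and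
in the second only if `n ∉ A₁`. Hence picking one would separate `A₀` from `A₁`.

The presentations encode counter machines. A register is translated by a commuting generator
`unit i`, a configuration is the conjugate of a state letter by a translation, and the rule letters
conjugate each configuration to its successor. A further letter `key` commutes with the rules and
with the halting configuration, hence with every configuration that halts. Conversely, let the
letters permute points coloured by arbitrary sets of configurations: every rule is realised by a
colour-preserving bijection between free actions, which exists because every colour pattern occurs
on equally many orbits. On a point coloured by the set of halting configurations the key fails to
commute with all the others. Finally, with `w` the commutator of the key and the initial
configuration, the relations `w z² w⁻¹ = z`, `z y² z⁻¹ = y`, `y e² y⁻¹ = e` kill the generators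
`e` if `w = 1`, while for `w` of infinite order they embed the group into a larger one, provided
that no nontrivial power of `e` is a power of `w`.
-/

open Function Monoid

section Equivariant

variable {F G G' W W' N B : Type*} [Group F] [Group G] [Group G']

theorem nonempty_prod_equiv_of_embedding {O : Type*} [Nonempty O] [Infinite N] (ι : O ↪ N) :
    Nonempty (O × N ≃ N) := by
  obtain ⟨square⟩ : Nonempty (N × N ≃ N) :=
    Cardinal.eq.1 (Cardinal.mul_eq_self (Cardinal.aleph0_le_mk N))
  exact ((ι.prodMap (.refl N)).trans square.toEmbedding).antisymm
    ⟨fun n => (Classical.arbitrary O, n), Prod.mk_right_injective _⟩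

theorem exists_prod_equiv_over {O Z : Type*} [Infinite N] (ι : O ↪ N) {π : O → Z}
    (hπ : Surjective π) (o : O) (n : N) :
    ∃ e : O × N ≃ Z × N, (∀ x, (e x).1 = π x.1) ∧ e (o, n) = (π o, n) := by
  classical
  have fiberEquiv (z : Z) : Nonempty ({o // π o = z} × N ≃ N) :=
    have : Nonempty {o // π o = z} := (hπ z).elim fun o h => ⟨⟨o, h⟩⟩
    nonempty_prod_equiv_of_embedding ((Embedding.subtype _).trans ι)
  let e : O × N ≃ Z × N :=
    ((Equiv.sigmaFiberEquiv π).symm.prodCongr (Equiv.refl N)).trans <|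
      (Equiv.sigmaProdDistrib _ N).trans <|
        (Equiv.sigmaCongrRight fun z => (fiberEquiv z).some).trans (Equiv.sigmaEquivProd Z N)
  have he (x : O × N) : (e x).1 = π x.1 := rfl
  refine ⟨e.trans (Equiv.swap (e (o, n)) (π o, n)), fun x => ?_, by simp⟩
  rw [Equiv.trans_apply, Equiv.swap_apply_def]
  split_ifs with h₁ h₂
  · rw [← he x, h₁, he]
  · rw [← he x, h₂, he]
  · exact he x

/-- The action of `G` on `G × X` by left multiplication on the first factor: a sum of copies of
the regular representation. -/
def leftRegular (G X : Type*) [Group G] : G →* Equiv.Perm (G × X) where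
  toFun g := (Equiv.mulLeft g).prodCongr (Equiv.refl X)
  map_one' := by ext <;> simp
  map_mul' _ _ := by ext <;> simp [mul_assoc]

@[simp]
theorem leftRegular_apply {X : Type*} (g : G) (x : G × X) :
    leftRegular G X g x = (g * x.1, x.2) := rfl

theorem leftRegular_injective {X : Type*} [Nonempty X] : Injective (leftRegular G X) := by
  intro g h hgh
  simpa using congrArg Prod.fst (Equiv.congr_fun hgh (1, Classical.arbitrary X))

theorem exists_equiv_prod_transversal {f : F →* G} (hf : Injective f) :
    ∃ (T : Set G) (e : F × T ≃ G), 1 ∈ T ∧ ∀ u x, e (u, x) = f u * x := by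
  obtain ⟨T, hT, one_mem⟩ := Subgroup.exists_isComplement_right f.range 1
  let e : F × T ≃ G :=
    ((MonoidHom.ofInjective hf).toEquiv.prodCongr (Equiv.refl T)).trans (Equiv.ofBijective _ hT)
  exact ⟨T, e, one_mem, fun _ _ => rfl⟩

/-- The colours of the points of one orbit of `F`, where `F` acts through `f` on the first
argument of the colouring `col`. -/
def orbitPattern (f : F →* G) (col : G → W → B) (w : W) (u : F) : B := col (f u) w

theorem exists_equivariant_equiv_patterns [Infinite N] {f : F →* G} (hf : Injective f)
    {col : G → W → B} (hcol : Surjective (orbitPattern f col)) (ι : G × W ↪ N) (w : W) (n : N) :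
    ∃ e : G × W × N ≃ F × (F → B) × N,
      (∀ u x, e (leftRegular G _ (f u) x) = leftRegular F _ u (e x)) ∧
      (∀ x, col x.1 x.2.1 = (e x).2.1 (e x).1) ∧ e (1, w, n) = (1, orbitPattern f col w, n) := by
  obtain ⟨T, transversal, one_mem, transversal_apply⟩ := exists_equiv_prod_transversal hf
  let π (o : T × W) (u : F) : B := col (f u * o.1) o.2
  have π_one (w : W) : π (⟨1, one_mem⟩, w) = orbitPattern f col w := by
    ext u
    simp [π, orbitPattern]
  have hπ : Surjective π := fun p => (hcol p).imp' (Prod.mk ⟨1, one_mem⟩) fun w hw => by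
    rw [π_one, hw]
  obtain ⟨fibre, fibre_fst, fibre_base⟩ :=
    exists_prod_equiv_over (((Embedding.subtype _).prodMap (.refl W)).trans ι) hπ
      (⟨1, one_mem⟩, w) n
  let split : F × (T × W) × N ≃ G × W × N :=
    { toFun x := (transversal (x.1, x.2.1.1), x.2.1.2, x.2.2)
      invFun x := ((transversal.symm x.1).1, ((transversal.symm x.1).2, x.2.1), x.2.2)
      left_inv x := by simp
      right_inv x := by simp }
  have split_base : split (1, (⟨1, one_mem⟩, w), n) = (1, w, n) := by
    simp [split, transversal_apply]
  refine ⟨split.symm.trans ((Equiv.refl F).prodCongr fibre), fun u x => ?_, fun x => ?_, ?_⟩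
  · obtain ⟨⟨v, o, m⟩, rfl⟩ := split.surjective x
    have : leftRegular G _ (f u) (split (v, o, m)) = split (u * v, o, m) := by
      simp [split, transversal_apply, mul_assoc]
    simp [this]
  · obtain ⟨⟨v, o, m⟩, rfl⟩ := split.surjective x
    change col (transversal (v, o.1)) o.2 = _
    simp [fibre_fst, π, transversal_apply]
  · simp [← split_base, fibre_base, π_one]

theorem exists_equivariant_equiv [Infinite N] {f : F →* G} {f' : F →* G'} (hf : Injective f)
    (hf' : Injective f') {col : G → W → B} {col' : G' → W' → B}
    (hcol : Surjective (orbitPattern f col)) (hcol' : Surjective (orbitPattern f' col'))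
    (ι : G × W ↪ N) (ι' : G' × W' ↪ N) {w : W} {w' : W'}
    (hw : orbitPattern f col w = orbitPattern f' col' w') (n : N) :
    ∃ σ : G × W × N ≃ G' × W' × N,
      (∀ u x, σ (leftRegular G _ (f u) x) = leftRegular G' _ (f' u) (σ x)) ∧
      (∀ x, col' (σ x).1 (σ x).2.1 = col x.1 x.2.1) ∧ σ (1, w, n) = (1, w', n) := by
  obtain ⟨e, he, e_col, e_base⟩ := exists_equivariant_equiv_patterns hf hcol ι w n
  obtain ⟨e', he', e'_col, e'_base⟩ := exists_equivariant_equiv_patterns hf' hcol' ι' w' n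
  refine ⟨e.trans e'.symm, fun u x => ?_, fun x => ?_, ?_⟩
  · rw [Equiv.trans_apply, Equiv.symm_apply_eq, he, he', Equiv.trans_apply, Equiv.apply_symm_apply]
  · rw [e'_col, e_col, Equiv.trans_apply, Equiv.apply_symm_apply]
  · rw [Equiv.trans_apply, Equiv.symm_apply_eq, e_base, e'_base, hw]

end Equivariant

section Amalgam

theorem injective_lift_pushoutI_of {ι H : Type*} {K G : ι → Type*} [∀ i, Group (K i)]
    [∀ i, Group (G i)] [Group H] {φ : ∀ i, H →* G i} (hφ : ∀ i, Injective (φ i))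
    {f : ∀ i, K i →* G i} (hf : ∀ i x, f i x ∈ (φ i).range → x = 1) :
    Injective (CoprodI.lift fun i => (PushoutI.of (φ := φ) i).comp (f i)) := by
  classical
  rw [injective_iff_map_eq_one]
  intro x hx
  obtain ⟨w, rfl⟩ := CoprodI.Word.equiv.symm.surjective x
  have not_mem_range {l : Σ i, K i} (hl : l ∈ w.toList) : f l.1 l.2 ∉ (φ l.1).range :=
    fun h => w.ne_one l hl (hf _ _ h)
  let fw : CoprodI.Word G :=
    { toList := w.toList.map fun l => ⟨l.1, f l.1 l.2⟩
      ne_one := by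
        rintro _ hl h_one
        obtain ⟨l, hl', rfl⟩ := List.mem_map.1 hl
        exact not_mem_range hl' ⟨1, (map_one _).trans h_one.symm⟩
      chain_ne := (List.isChain_map _).2 w.chain_ne }
  have reduced : PushoutI.Reduced φ fw := by
    intro _ hl
    obtain ⟨l, hl', rfl⟩ := List.mem_map.1 hl
    exact not_mem_range hl'
  have prod_eq_one : PushoutI.ofCoprodI (φ := φ) fw.prod = 1 := by
    rw [← hx]
    simp only [CoprodI.Word.equiv, Equiv.coe_fn_symm_mk, CoprodI.Word.prod, fw, map_list_prod,
      List.map_map]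
    congr 1
  have fw_empty : fw.toList = [] :=
    congrArg _ (reduced.eq_empty_of_mem_range hφ (prod_eq_one ▸ one_mem _))
  have w_empty : w.toList = [] := List.map_eq_nil_iff.1 fw_empty
  simp [CoprodI.Word.equiv, CoprodI.Word.prod, w_empty]

/-- No nontrivial power of `h` is a power of `c`; equivalently `h` has infinite order and the
cyclic subgroups generated by `h` and `c` meet trivially. -/
def AvoidsPowers {G : Type*} [Group G] (h c : G) : Prop :=
  ∀ n : ℤ, h ^ n ∈ Subgroup.zpowers c → n = 0

variable {G ι : Type*} [Group G]

theorem AvoidsPowers.not_isOfFinOrder {h c : G} (hc : AvoidsPowers h c) : ¬IsOfFinOrder h := by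
  rw [isOfFinOrder_iff_zpow_eq_one]
  rintro ⟨n, hn, h_one⟩
  exact hn (hc n (h_one ▸ one_mem _))

theorem AvoidsPowers.map {G' : Type*} [Group G'] {h c : G} (hc : AvoidsPowers h c) {f : G →* G'}
    (hf : Injective f) : AvoidsPowers (f h) (f c) := fun n ⟨m, hm⟩ =>
  hc n ⟨m, hf <| by simpa using hm⟩

theorem AvoidsPowers.of_map {G' : Type*} [Group G'] {h c : G} (f : G →* G')
    (hc : AvoidsPowers (f h) (f c)) : AvoidsPowers h c := fun n ⟨m, hm⟩ =>
  hc n ⟨m, by simpa using congrArg f hm⟩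

theorem zpowersHom_injective {c : G} (hc : ¬IsOfFinOrder c) : Injective (zpowersHom G c) :=
  fun _ _ h => Multiplicative.toAdd.injective (injective_zpow_iff_not_isOfFinOrder.2 hc h)

/-- The amalgam of a family of copies of `G`, indexed by `ι`, along the infinite cyclic subgroups
generated by the elements `c i`. -/
abbrev CyclicAmalgam (c : ι → G) : Type _ := PushoutI fun i => zpowersHom G (c i)

namespace CyclicAmalgam

variable {c : ι → G}

variable (c) in
/-- The inclusion of the `i`-th copy of `G` into the amalgam. -/
abbrev of (i : ι) : G →* CyclicAmalgam c :=
  PushoutI.of (G := fun _ => G) (φ := fun i => zpowersHom G (c i)) i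

theorem of_apply_eq (i j : ι) : of c i (c i) = of c j (c j) := by
  simpa using (PushoutI.of_apply_eq_base (fun i => zpowersHom G (c i)) i (.ofAdd 1)).trans
    (PushoutI.of_apply_eq_base (fun i => zpowersHom G (c i)) j (.ofAdd 1)).symm

theorem of_injective (hc : ∀ i, ¬IsOfFinOrder (c i)) (i : ι) : Injective (of c i) :=
  PushoutI.of_injective (fun i => zpowersHom_injective (hc i)) i

theorem injective_freeGroup_lift (hc : ∀ i, ¬IsOfFinOrder (c i)) {h : ι → G}
    (hh : ∀ i, AvoidsPowers (h i) (c i)) : Injective (FreeGroup.lift fun i => of c i (h i)) := by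
  let f (i : ι) : FreeGroup Unit →* G := FreeGroup.lift fun _ => h i
  have hf (i : ι) (x : FreeGroup Unit) (hx : f i x ∈ (zpowersHom G (c i)).range) : x = 1 := by
    obtain ⟨n, rfl⟩ := FreeGroup.freeGroupUnitEquivInt.symm.surjective x
    obtain rfl : n = 0 := hh i n (by
      simpa [f, FreeGroup.freeGroupUnitEquivInt, Subgroup.mem_zpowers_iff] using hx)
    simp [FreeGroup.freeGroupUnitEquivInt]
  have lift_eq : (FreeGroup.lift fun i => of c i (h i)) =
      (CoprodI.lift fun i => (of c i).comp (f i)).comp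
        (freeGroupEquivCoprodI (ι := ι)).toMonoidHom := by
    ext
    simp [f]
  rw [lift_eq]
  exact (injective_lift_pushoutI_of (fun i => zpowersHom_injective (hc i)) hf).comp
    freeGroupEquivCoprodI.injective

end CyclicAmalgam

end Amalgam

namespace BaumslagSolitar

/-- Translation of the rational line by one. -/
def shift : Equiv.Perm ℚ := Equiv.addRight 1

/-- Halving on the rational line. Together with `shift` it generates a copy of the
Baumslag–Solitar group `BS(1, 2)`. -/
def halve : Equiv.Perm ℚ := MulAction.toPermHom ℚˣ ℚ (Units.mk0 2 two_ne_zero)⁻¹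

theorem semiconjBy_halve : SemiconjBy halve (shift ^ 2) shift := by
  ext x
  simp [halve, shift, pow_two, Units.smul_def, one_add_one_eq_two]

theorem shift_zpow_apply (n : ℤ) (x : ℚ) : (shift ^ n) x = x + n := by
  simp [shift]

theorem halve_zpow_apply (n : ℤ) (x : ℚ) : (halve ^ n) x = (2 : ℚ) ^ (-n) * x := by
  rw [halve, ← map_zpow]
  simp [Units.smul_def]

theorem avoidsPowers_shift_halve : AvoidsPowers shift halve := by
  rintro n ⟨m, h⟩
  simpa [shift_zpow_apply, halve_zpow_apply] using (Equiv.congr_fun h 0).symm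

theorem avoidsPowers_halve_shift : AvoidsPowers halve shift := by
  rintro n ⟨m, h⟩
  have hm : m = 0 := by
    simpa [shift_zpow_apply, halve_zpow_apply] using Equiv.congr_fun h 0
  have two_zpow : (2 : ℚ) ^ n = 1 := by
    simpa [hm, halve_zpow_apply] using Equiv.congr_fun h 1
  exact (zpow_eq_one_iff_right₀ zero_le_two (by norm_num)).1 two_zpow

end BaumslagSolitar

section KillingExtension

universe u

theorem exists_hom_perm_extending_leftRegular {F G G' N : Type*} [Group F] [Group G] [Group G']
    [Infinite N] {f : F →* G} {f' : F →* G'} (hf : Injective f) (hf' : Injective f') (ι : G ↪ N)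
    (ι' : G' ↪ N) :
    ∃ ψ : G' →* Equiv.Perm (G × N), ∀ u, ψ (f' u) = leftRegular G N (f u) := by
  have hcol : Surjective (orbitPattern f fun _ (_ : Unit) => ()) := fun _ => ⟨(), rfl⟩
  have hcol' : Surjective (orbitPattern f' fun _ (_ : Unit) => ()) := fun _ => ⟨(), rfl⟩
  obtain ⟨σ, hσ, -, -⟩ := exists_equivariant_equiv hf hf' hcol hcol'
    ((Equiv.prodPUnit G).toEmbedding.trans ι) ((Equiv.prodPUnit G').toEmbedding.trans ι')
    (w := ()) (w' := ()) rfl (Classical.arbitrary N)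
  let drop : G × Unit × N ≃ G × N := (Equiv.refl G).prodCongr (Equiv.punitProd N)
  let drop' : G' × Unit × N ≃ G' × N := (Equiv.refl G').prodCongr (Equiv.punitProd N)
  let τ : G × N ≃ G' × N := drop.symm.trans (σ.trans drop')
  have hτ (u : F) (x : G × N) : τ (f u * x.1, x.2) = (f' u * (τ x).1, (τ x).2) :=
    congrArg drop' (hσ u (drop.symm x))
  refine ⟨τ.symm.permCongrHom.toMonoidHom.comp (leftRegular G' N), fun u => Equiv.ext fun x => ?_⟩
  change τ.symm (f' u * (τ x).1, (τ x).2) = (f u * x.1, x.2)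
  rw [← hτ, Equiv.symm_apply_apply]

open BaumslagSolitar in
theorem exists_extension_semiconjBy_sq {G : Type u} [Group G] {w : G} (hw : ¬IsOfFinOrder w) :
    ∃ (P : Type u) (_ : Group P) (j : G →* P) (z : P), Injective j ∧
      SemiconjBy (j w) (z ^ 2) z ∧
      ∀ e, AvoidsPowers e w → Injective (FreeGroup.lift fun b : Bool => cond b (j e) z) := by
  let inl := MonoidHom.inl G (Equiv.Perm ℚ)
  let inr := MonoidHom.inr G (Equiv.Perm ℚ)
  have inl_injective : Injective inl := Prod.mk_left_injective _
  have inr_injective : Injective inr := Prod.mk_right_injective _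
  let c (b : Bool) : G × Equiv.Perm ℚ := cond b (inl w) (inr halve)
  have hc (b : Bool) : ¬IsOfFinOrder (c b) := by
    cases b
    · exact mt (inr_injective.isOfFinOrder_iff).1 avoidsPowers_halve_shift.not_isOfFinOrder
    · exact mt (inl_injective.isOfFinOrder_iff).1 hw
  refine ⟨CyclicAmalgam c, inferInstance, (CyclicAmalgam.of c true).comp inl,
    CyclicAmalgam.of c false (inr shift), (CyclicAmalgam.of_injective hc true).comp inl_injective,
    ?_, fun e he => ?_⟩
  · have of_halve : CyclicAmalgam.of c false (inr halve) = CyclicAmalgam.of c true (inl w) :=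
      CyclicAmalgam.of_apply_eq (c := c) false true
    simpa [of_halve] using (semiconjBy_halve.map inr).map (CyclicAmalgam.of c false)
  · have := CyclicAmalgam.injective_freeGroup_lift hc (h := fun b => cond b (inl e) (inr shift))
      fun b => by
        cases b
        · exact avoidsPowers_shift_halve.map inr_injective
        · exact he.map inl_injective
    convert this using 4 with b
    cases b <;> rfl

open BaumslagSolitar in
theorem exists_semiconjBy_sq_chain :
    ∃ (Q : Type) (_ : Group Q) (e y z : Q), SemiconjBy z (y ^ 2) y ∧ SemiconjBy y (e ^ 2) e ∧
      Injective (FreeGroup.lift fun b : Bool => cond b e z) := by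
  obtain ⟨Q, _, j, e, -, he, free⟩ :=
    exists_extension_semiconjBy_sq avoidsPowers_shift_halve.not_isOfFinOrder
  refine ⟨Q, _, e, j shift, j halve, by simpa using semiconjBy_halve.map j, he, ?_⟩
  have lift_eq : (FreeGroup.lift fun b : Bool => cond b e (j halve)) =
      (FreeGroup.lift fun b : Bool => cond b (j halve) e).comp
        (FreeGroup.freeGroupCongr Equiv.boolNot).toMonoidHom := by
    ext b
    cases b <;> simp
  rw [lift_eq]
  exact (free _ avoidsPowers_halve_shift).comp (FreeGroup.freeGroupCongr _).injective

theorem exists_killing_extension {G : Type u} {I : Type*} [Group G] {w : G} {e : I → G}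
    (hw : ¬IsOfFinOrder w) (he : ∀ i, AvoidsPowers (e i) w) :
    ∃ (P : Type u) (_ : Group P) (j : G →* P) (z : P) (y : I → P), Injective j ∧
      SemiconjBy (j w) (z ^ 2) z ∧ (∀ i, SemiconjBy z (y i ^ 2) (y i)) ∧
      ∀ i, SemiconjBy (y i) (j (e i) ^ 2) (j (e i)) := by
  obtain ⟨P, _, j, z, j_injective, hz, free_P⟩ := exists_extension_semiconjBy_sq hw
  obtain ⟨Q, _, e', y', z', hz', hy', free_Q⟩ := exists_semiconjBy_sq_chain
  have extend (i : I) := exists_hom_perm_extending_leftRegular (free_P _ (he i)) free_Q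
    (N := P × Q × ℕ) ⟨fun p => (p, 1, 0), Prod.mk_left_injective _⟩
    ⟨fun q => (1, q, 0), (Prod.mk_right_injective _).comp (Prod.mk_left_injective _)⟩
  choose ψ hψ using extend
  have ψ_z (i : I) : ψ i z' = leftRegular P (P × Q × ℕ) z := by
    simpa using hψ i (FreeGroup.of false)
  have ψ_e (i : I) : ψ i e' = leftRegular P (P × Q × ℕ) (j (e i)) := by
    simpa using hψ i (FreeGroup.of true)
  refine ⟨_, inferInstance, (leftRegular P (P × Q × ℕ)).comp j, leftRegular P _ z,
    fun i => ψ i y', leftRegular_injective.comp j_injective, ?_, fun i => ?_, fun i => ?_⟩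
  · simpa using hz.map (leftRegular P (P × Q × ℕ))
  · simpa [ψ_z] using hz'.map (ψ i)
  · simpa [ψ_e] using hy'.map (ψ i)

end KillingExtension

/-- A system of reversible rewriting rules on configurations `Q × A`. The rule `r` relates
`(src r, srcShift r * srcHom r u)` to `(tgt r, tgtShift r * tgtHom r u)`, for every `u : A`. -/
structure RuleSystem (A Q R : Type*) [Group A] where
  (src tgt : R → Q)
  (srcShift tgtShift : R → A)
  (srcHom tgtHom : R → A →* A)
  srcHom_injective (r : R) : Injective (srcHom r)
  tgtHom_injective (r : R) : Injective (tgtHom r)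

namespace RuleSystem

variable {A Q R : Type*} [Group A] (S : RuleSystem A Q R)

/-- A set of configurations that is a union of classes of the equivalence relation generated by
the rules. -/
def Invariant (H : Set (Q × A)) : Prop :=
  ∀ r u, (S.src r, S.srcShift r * S.srcHom r u) ∈ H ↔ (S.tgt r, S.tgtShift r * S.tgtHom r u) ∈ H

/-- Elements of a group `G` encoding a rule system: the configuration `(q, a)` is encoded by the
conjugate of `state q` by `trans a`, the rules act on these conjugates by conjugation, and `key`
commutes with the rules. -/
structure Representation (G : Type*) [Group G] where
  trans : A →* G
  state : Q → G
  rule : R → G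
  key : G
  rule_trans (r : R) (u : A) :
    SemiconjBy (rule r) (trans (S.srcHom r u)) (trans (S.tgtHom r u))
  rule_state (r : R) :
    SemiconjBy (rule r) ((trans (S.srcShift r))⁻¹ * state (S.src r) * trans (S.srcShift r))
      ((trans (S.tgtShift r))⁻¹ * state (S.tgt r) * trans (S.tgtShift r))
  commute_key_rule (r : R) : Commute key (rule r)

namespace Representation

variable {S} {G : Type*} [Group G] (ρ : S.Representation G)

/-- The group element encoding a configuration. -/
def config (C : Q × A) : G := (ρ.trans C.2)⁻¹ * ρ.state C.1 * ρ.trans C.2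

theorem config_mul (q : Q) (a b : A) :
    ρ.config (q, a * b) = (ρ.trans b)⁻¹ * ρ.config (q, a) * ρ.trans b := by
  simp [config, mul_assoc]

theorem semiconjBy_rule_config (r : R) (u : A) :
    SemiconjBy (ρ.rule r) (ρ.config (S.src r, S.srcShift r * S.srcHom r u))
      (ρ.config (S.tgt r, S.tgtShift r * S.tgtHom r u)) := by
  have hu := ρ.rule_trans r u
  rw [config_mul, config_mul]
  exact (hu.inv_right.mul_right (ρ.rule_state r)).mul_right hu

theorem invariant_setOf_commute_key : S.Invariant {C | Commute ρ.key (ρ.config C)} := by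
  intro r u
  have key_eq : ρ.rule r * ρ.key * (ρ.rule r)⁻¹ = ρ.key :=
    mul_inv_eq_of_eq_mul (ρ.commute_key_rule r).symm
  have config_eq := mul_inv_eq_of_eq_mul (ρ.semiconjBy_rule_config r u)
  change Commute _ _ ↔ Commute _ _
  rw [← config_eq, ← Commute.conj_iff (ρ.rule r), key_eq]

/-- Adjoin a degree homomorphism for which translations have degree zero and the states, the rules
and the key have degree one. -/
def graded : S.Representation (G × Multiplicative ℤ) where
  trans := (MonoidHom.inl G _).comp ρ.trans
  state q := (ρ.state q, .ofAdd 1)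
  rule r := (ρ.rule r, .ofAdd 1)
  key := (ρ.key, .ofAdd 1)
  rule_trans r u := Prod.ext (ρ.rule_trans r u) (mul_comm _ _)
  rule_state r := Prod.ext (ρ.rule_state r) (by simp)
  commute_key_rule r := Prod.ext (ρ.commute_key_rule r) rfl

theorem graded_config (C : Q × A) : ρ.graded.config C = (ρ.config C, .ofAdd 1) :=
  Prod.ext rfl (by simp [config, graded])

end Representation

theorem surjective_orbitPattern_mem {f : A →* A} (hf : Injective f) (q : Q) (b : A) :
    Surjective (orbitPattern f fun a (w : Set (Q × A)) => (q, b * a) ∈ w) := by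
  intro p
  refine ⟨{C | ∃ u, p u ∧ C = (q, b * f u)}, funext fun u => propext ?_⟩
  simp [orbitPattern, hf.eq_iff]

/-- The points permuted by the model of a rule system: the second component prescribes a colour
for every configuration, and the last one provides enough copies of every orbit. -/
abbrev Points (A Q : Type*) : Type _ := A × Set (Q × A) × (A × Set (Q × A)) × ℕ

/-- The point at which the key acts, coloured by `H`. -/
def basePoint (H : Set (Q × A)) : Points A Q := (1, H, (1, H), 0)

theorem Invariant.exists_rule_perm {S : RuleSystem A Q R} {H : Set (Q × A)} (hH : S.Invariant H)
    (r : R) :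
    ∃ σ : Equiv.Perm (Points A Q),
      (∀ u, SemiconjBy σ (leftRegular A _ (S.srcHom r u)) (leftRegular A _ (S.tgtHom r u))) ∧
      (∀ x, (S.tgt r, S.tgtShift r * (σ x).1) ∈ (σ x).2.1 ↔
        (S.src r, S.srcShift r * x.1) ∈ x.2.1) ∧ σ (basePoint H) = basePoint H := by
  obtain ⟨σ, hσ, σ_col, σ_base⟩ :=
    exists_equivariant_equiv (S.srcHom_injective r) (S.tgtHom_injective r)
      (surjective_orbitPattern_mem (S.srcHom_injective r) (S.src r) (S.srcShift r))
      (surjective_orbitPattern_mem (S.tgtHom_injective r) (S.tgt r) (S.tgtShift r))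
      (N := (A × Set (Q × A)) × ℕ) ⟨fun x => (x, 0), Prod.mk_left_injective _⟩
      ⟨fun x => (x, 0), Prod.mk_left_injective _⟩ (w := H) (w' := H)
      (funext fun u => propext (hH r u)) ((1, H), 0)
  exact ⟨σ, fun u => Equiv.ext (hσ u), fun x => iff_of_eq (σ_col x), σ_base⟩

open BaumslagSolitar
open scoped commutatorElement

/-- The group of permutations of the points, extended by rational permutations over each of
them. -/
abbrev ModelGroup (A Q : Type*) : Type _ :=
  (Points A Q → Equiv.Perm ℚ) ⋊[mulAutArrow] Equiv.Perm (Points A Q)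

open scoped Classical in
/-- The element of the model encoding a configuration: `shift` over those points whose colouring
does not contain the configuration. -/
noncomputable def modelConfig (C : Q × A) (x : Points A Q) : Equiv.Perm ℚ :=
  if (C.1, C.2 * x.1) ∈ x.2.1 then 1 else shift

open scoped Classical in
/-- The element of the model acting as the key: `halve⁻¹` over the base point. -/
noncomputable def modelKey (H : Set (Q × A)) : Points A Q → Equiv.Perm ℚ :=
  Pi.mulSingle (basePoint H) halve⁻¹

theorem modelConfig_congr {C D : Q × A} {x y : Points A Q}
    (h : (C.1, C.2 * x.1) ∈ x.2.1 ↔ (D.1, D.2 * y.1) ∈ y.2.1) :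
    modelConfig C x = modelConfig D y := by
  classical exact if_congr h rfl rfl

theorem semiconjBy_inr_inl {Y K : Type*} [Group K] (σ : Equiv.Perm Y) {F F' : Y → K}
    (h : ∀ x, F' (σ x) = F x) :
    SemiconjBy (SemidirectProduct.inr σ : (Y → K) ⋊[mulAutArrow] Equiv.Perm Y)
      (SemidirectProduct.inl F) (SemidirectProduct.inl F') := by
  have aut_eq : mulAutArrow σ F = F' := funext fun x => by
    exact (h (σ⁻¹ x)).symm.trans (by simp)
  exact (mul_inv_eq_iff_eq_mul.1 (by rw [← aut_eq, SemidirectProduct.inl_aut, map_inv]))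

theorem conj_inl_modelConfig (q : Q) (a : A) :
    (SemidirectProduct.inr (leftRegular A _ a))⁻¹ * SemidirectProduct.inl (modelConfig (q, 1)) *
      SemidirectProduct.inr (leftRegular A _ a) =
    (SemidirectProduct.inl (modelConfig (q, a)) : ModelGroup A Q) := by
  rw [mul_assoc, inv_mul_eq_iff_eq_mul, eq_comm]
  exact semiconjBy_inr_inl _ fun x => modelConfig_congr (by simp)

variable {S} {H : Set (Q × A)}

/-- A representation in which the key commutes precisely with the configurations in `H`. -/
noncomputable def model (hH : S.Invariant H) : S.Representation (ModelGroup A Q) where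
  trans := SemidirectProduct.inr.comp (leftRegular A _)
  state q := SemidirectProduct.inl (modelConfig (q, 1))
  rule r := SemidirectProduct.inr (hH.exists_rule_perm r).choose
  key := SemidirectProduct.inl (modelKey H)
  rule_trans r u := ((hH.exists_rule_perm r).choose_spec.1 u).map SemidirectProduct.inr
  rule_state r := by
    simp only [MonoidHom.comp_apply, conj_inl_modelConfig]
    exact semiconjBy_inr_inl _ fun x =>
      modelConfig_congr ((hH.exists_rule_perm r).choose_spec.2.1 x)
  commute_key_rule r := by
    classical
    have base_eq := (hH.exists_rule_perm r).choose_spec.2.2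
    refine Commute.symm (semiconjBy_inr_inl _ fun x => ?_)
    simp only [modelKey, Pi.mulSingle_apply]
    exact if_congr (by
      conv_rhs => rw [← Equiv.apply_eq_iff_eq (hH.exists_rule_perm r).choose, base_eq]) rfl rfl

theorem model_config (hH : S.Invariant H) (C : Q × A) :
    (model hH).config C = SemidirectProduct.inl (modelConfig C) :=
  conj_inl_modelConfig C.1 C.2

theorem commute_model_key_config (hH : S.Invariant H) {C : Q × A} (hC : C ∈ H) :
    Commute (model hH).key ((model hH).config C) := by
  rw [model_config]
  refine Commute.map (funext fun x => ?_) SemidirectProduct.inl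
  by_cases hx : x = basePoint H
  · simp [hx, modelConfig, basePoint, hC]
  · simp [modelKey, hx]

theorem not_isOfFinOrder_model_key_config (hH : S.Invariant H) {C : Q × A} (hC : C ∉ H) :
    ¬IsOfFinOrder ⁅(model hH).key, (model hH).config C⁆ := by
  have commutator_eq : ⁅halve⁻¹, shift⁆ = shift := by
    rw [commutatorElement_def, inv_inv, mul_inv_eq_iff_eq_mul, mul_assoc, inv_mul_eq_iff_eq_mul,
      ← pow_two, semiconjBy_halve.eq]
  intro h
  have inl_eq : ⁅(model hH).key, (model hH).config C⁆ =
      SemidirectProduct.inl ⁅modelKey H, modelConfig C⁆ := by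
    rw [model_config, map_commutatorElement]
    rfl
  have h_fun : IsOfFinOrder ⁅modelKey H, modelConfig C⁆ :=
    SemidirectProduct.inl_injective.isOfFinOrder_iff.1 (inl_eq ▸ h)
  have h_base := (Pi.evalMonoidHom _ (basePoint H)).isOfFinOrder h_fun
  rw [map_commutatorElement] at h_base
  refine avoidsPowers_shift_halve.not_isOfFinOrder ?_
  simpa [modelKey, modelConfig, basePoint, hC, commutator_eq] using h_base

end RuleSystem

/-- A counter machine with integer registers indexed by `ι`, working in base `B`. In state `q` it
looks at the last base-`B` digit `d` of the register `register q`, replaces the content `B * u + d`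
of this register by `mul q d * u + add q d`, and enters the state `next q d`, where `none` means
that it halts. -/
structure DigitMachine (B : ℕ) (Q ι : Type*) where
  register : Q → ι
  next : Q → Fin B → Option Q
  (mul add : Q → Fin B → ℕ)
  mul_ne_zero (q : Q) (d : Fin B) : mul q d ≠ 0

namespace DigitMachine

open StateTransition

variable {B : ℕ} {Q ι : Type*} [NeZero B] [DecidableEq ι] (M : DigitMachine B Q ι)

/-- One step of the machine. -/
def step : Option Q × (ι → ℤ) → Option (Option Q × (ι → ℤ))
  | (none, _) => none
  | (some q, v) =>
    let c := Int.divModEquiv B (v (M.register q))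
    some (M.next q c.2, update v (M.register q) (M.mul q c.2 * c.1 + M.add q c.2))

theorem step_of_register_eq {q : Q} {v : ι → ℤ} {u : ℤ} {d : Fin B}
    (h : v (M.register q) = B * u + d) :
    M.step (some q, v) =
      some (M.next q d, update v (M.register q) (M.mul q d * u + M.add q d)) := by
  have divMod : Int.divModEquiv B (v (M.register q)) = (u, d) := by
    rw [← Equiv.eq_symm_apply, h]
    simp [mul_comm]
  simp [step, divMod]

/-- The machine halts with all registers equal to zero. -/
def HaltsAtZero (C : Option Q × (ι → ℤ)) : Prop := (none, 0) ∈ eval M.step C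

/-- Multiplication of the register `i` by `m`, in multiplicative notation. -/
def scaleRegister (i : ι) (m : ℕ) : (ι → Multiplicative ℤ) →* (ι → Multiplicative ℤ) :=
  MonoidHom.pi fun j =>
    (powMonoidHom ((Pi.mulSingle i m : ι → ℕ) j)).comp (Pi.evalMonoidHom _ j)

theorem scaleRegister_injective (i : ι) {m : ℕ} (hm : m ≠ 0) : Injective (scaleRegister i m) := by
  intro u v h
  funext j
  have hj : (Pi.mulSingle i m : ι → ℕ) j ≠ 0 := by
    rw [Pi.mulSingle_apply]
    split_ifs
    exacts [hm, one_ne_zero]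
  exact pow_left_injective hj (congrFun h j)

theorem scaleRegister_mulSingle (i j : ι) (m : ℕ) (a : Multiplicative ℤ) :
    scaleRegister i m (Pi.mulSingle j a) =
      Pi.mulSingle j (a ^ (Pi.mulSingle i m : ι → ℕ) j) := by
  ext l
  by_cases h : l = j
  · subst h
    simp [scaleRegister]
  · simp [scaleRegister, h]

/-- The transitions of the machine, as a system of reversible rules. -/
def ruleSystem : RuleSystem (ι → Multiplicative ℤ) (Option Q) (Q × Fin B) where
  src r := some r.1
  tgt r := M.next r.1 r.2
  srcShift r := Pi.mulSingle (M.register r.1) (.ofAdd r.2)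
  tgtShift r := Pi.mulSingle (M.register r.1) (.ofAdd (M.add r.1 r.2))
  srcHom r := scaleRegister (M.register r.1) B
  tgtHom r := scaleRegister (M.register r.1) (M.mul r.1 r.2)
  srcHom_injective _ := scaleRegister_injective _ (NeZero.ne B)
  tgtHom_injective _ := scaleRegister_injective _ (M.mul_ne_zero _ _)

/-- The configuration of the machine with register contents `C.2`, in multiplicative notation. -/
def toCfg (C : Option Q × (ι → Multiplicative ℤ)) : Option Q × (ι → ℤ) :=
  (C.1, fun i => (C.2 i).toAdd)

theorem step_src (r : Q × Fin B) (u : ι → Multiplicative ℤ) :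
    M.step (toCfg (M.ruleSystem.src r, M.ruleSystem.srcShift r * M.ruleSystem.srcHom r u)) =
      some (toCfg (M.ruleSystem.tgt r, M.ruleSystem.tgtShift r * M.ruleSystem.tgtHom r u)) := by
  refine (M.step_of_register_eq (d := r.2) (u := (u (M.register r.1)).toAdd)
    (by simp [ruleSystem, scaleRegister, add_comm])).trans ?_
  refine congrArg some (Prod.ext rfl (funext fun j => ?_))
  by_cases hj : j = M.register r.1
  · subst hj
    simp [ruleSystem, toCfg, scaleRegister, add_comm]
  · simp [ruleSystem, toCfg, scaleRegister, hj]

theorem exists_eq_src (q : Q) (a : ι → Multiplicative ℤ) :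
    ∃ r u, (some q, a) =
      (M.ruleSystem.src r, M.ruleSystem.srcShift r * M.ruleSystem.srcHom r u) := by
  let c := Int.divModEquiv B (a (M.register q)).toAdd
  have hc : (a (M.register q)).toAdd = c.2 + B * c.1 := by
    conv_lhs => rw [← (Int.divModEquiv B).symm_apply_apply (a (M.register q)).toAdd]
    simp [c, mul_comm, add_comm]
  refine ⟨(q, c.2), update a (M.register q) (.ofAdd c.1),
    Prod.ext rfl (funext fun j => Multiplicative.toAdd.injective ?_)⟩
  by_cases hj : j = M.register q
  · subst hj
    simpa [ruleSystem, scaleRegister] using hc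
  · simp [ruleSystem, scaleRegister, hj]

theorem invariant_setOf_haltsAtZero : M.ruleSystem.Invariant {C | M.HaltsAtZero (toCfg C)} := by
  intro r u
  change M.HaltsAtZero _ ↔ M.HaltsAtZero _
  rw [HaltsAtZero, HaltsAtZero, reaches_eval (.single (M.step_src r u))]

theorem mem_of_haltsAtZero {H : Set (Option Q × (ι → Multiplicative ℤ))}
    (hH : M.ruleSystem.Invariant H) (h_none : (none, 1) ∈ H)
    {C : Option Q × (ι → Multiplicative ℤ)} (hC : M.HaltsAtZero (toCfg C)) : C ∈ H := by
  obtain ⟨h_reach, -⟩ := mem_eval.1 hC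
  clear hC
  generalize hD : toCfg C = D at h_reach
  induction h_reach using Relation.ReflTransGen.head_induction_on generalizing C with
  | refl =>
    obtain ⟨q, a⟩ := C
    obtain ⟨rfl, ha⟩ := Prod.ext_iff.1 hD
    exact (show a = 1 from ha) ▸ h_none
  | head h_step _ ih =>
    subst hD
    obtain ⟨_ | q, a⟩ := C
    · exact absurd h_step (Option.not_mem_none _)
    · obtain ⟨r, u, hC_src⟩ := M.exists_eq_src q a
      rw [hC_src, M.step_src] at h_step
      exact hC_src ▸ (hH r u).2 (ih (Option.some.inj h_step))

end DigitMachine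

/-- The element that vanishes precisely when `a` conjugates `x` to `y`. -/
def semiconjRelator {G : Type*} [Group G] (a x y : G) : G := a * x * (y * a)⁻¹

theorem map_semiconjRelator_eq_one_iff {G H : Type*} [Group G] [Group H] (f : G →* H) {a x y : G} :
    f (semiconjRelator a x y) = 1 ↔ SemiconjBy (f a) (f x) (f y) := by
  simp [semiconjRelator, mul_inv_eq_one, SemiconjBy, -mul_inv_rev]

theorem eq_one_of_semiconjBy_one_sq {G : Type*} [Group G] {a : G} (h : SemiconjBy 1 (a ^ 2) a) :
    a = 1 := by
  simpa [SemiconjBy, pow_two] using h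

/-- The generators of a killing presentation: those of the original presentation, one for each
element to be killed, and one for the element triggering the collapse. -/
inductive KillingGen (α I : Type*)
  | base (a : α)
  | link (i : I)
  | root

namespace KillingGen

universe u

variable {α I : Type*}

instance [Finite α] [Finite I] : Finite (KillingGen α I) :=
  Finite.of_injective (β := α ⊕ I ⊕ Unit)
    (fun | base a => .inl a | link i => .inr (.inl i) | root => .inr (.inr ()))
    (by rintro (_ | _ | _) (_ | _ | _) h <;> simp_all)

/-- The relators that make all the `e i` trivial as soon as `w` is. -/
def relators (w : FreeGroup α) (e : I → FreeGroup α) : Set (FreeGroup (KillingGen α I)) :=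
  {semiconjRelator (FreeGroup.map base w) (.of root ^ 2) (.of root)} ∪
    Set.range (fun i => semiconjRelator (.of root) (.of (link i) ^ 2) (.of (link i))) ∪
    Set.range fun i =>
      semiconjRelator (.of (link i)) (FreeGroup.map base (e i) ^ 2) (FreeGroup.map base (e i))

theorem finite_relators [Finite I] (w : FreeGroup α) (e : I → FreeGroup α) :
    (relators w e).Finite :=
  ((Set.finite_singleton _).union (Set.finite_range _)).union (Set.finite_range _)

theorem forall_mem_relators_iff {G : Type*} [Group G] (w : FreeGroup α) (e : I → FreeGroup α)
    (f : FreeGroup (KillingGen α I) →* G) :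
    (∀ r ∈ relators w e, f r = 1) ↔
      SemiconjBy (f (FreeGroup.map base w)) (f (.of root) ^ 2) (f (.of root)) ∧
      (∀ i, SemiconjBy (f (.of root)) (f (.of (link i)) ^ 2) (f (.of (link i)))) ∧
      ∀ i, SemiconjBy (f (.of (link i))) (f (FreeGroup.map base (e i)) ^ 2)
        (f (FreeGroup.map base (e i))) := by
  simp [relators, or_imp, forall_and, map_semiconjRelator_eq_one_iff, and_assoc]

theorem eq_one_of_base_eq_one {G : Type*} [Group G] {w : FreeGroup α} {e : I → FreeGroup α}
    (he : Subgroup.closure (Set.range e) = ⊤) {f : FreeGroup (KillingGen α I) →* G}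
    (hf : ∀ r ∈ relators w e, f r = 1) (hw : f (FreeGroup.map base w) = 1) : f = 1 := by
  obtain ⟨h_root, h_link, h_base⟩ := (forall_mem_relators_iff w e f).1 hf
  have root_eq : f (.of root) = 1 := eq_one_of_semiconjBy_one_sq (hw ▸ h_root)
  have link_eq (i : I) : f (.of (link i)) = 1 := eq_one_of_semiconjBy_one_sq (root_eq ▸ h_link i)
  have e_eq (i : I) : f (FreeGroup.map base (e i)) = 1 :=
    eq_one_of_semiconjBy_one_sq (link_eq i ▸ h_base i)
  have base_eq : f.comp (FreeGroup.map base) = 1 :=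
    MonoidHom.eq_of_eqOn_dense he (Set.forall_mem_range.2 e_eq)
  ext (a | i | _)
  · simpa using DFunLike.congr_fun base_eq (.of a)
  · exact link_eq i
  · exact root_eq

theorem exists_lift_of_avoidsPowers {G : Type u} [Group G] {w : FreeGroup α} {e : I → FreeGroup α}
    (f : FreeGroup α →* G) (hw : ¬IsOfFinOrder (f w)) (he : ∀ i, AvoidsPowers (f (e i)) (f w)) :
    ∃ (P : Type u) (_ : Group P) (j : G →* P) (g : FreeGroup (KillingGen α I) →* P),
      Injective j ∧ g.comp (FreeGroup.map base) = j.comp f ∧ ∀ r ∈ relators w e, g r = 1 := by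
  obtain ⟨P, _, j, z, y, hj, h_root, h_link, h_base⟩ := exists_killing_extension hw he
  let g : FreeGroup (KillingGen α I) →* P :=
    FreeGroup.lift fun | base a => j (f (.of a)) | link i => y i | root => z
  have g_base : g.comp (FreeGroup.map base) = j.comp f := by
    ext a
    simp [g]
  have g_base_apply (x : FreeGroup α) : g (FreeGroup.map base x) = j (f x) :=
    DFunLike.congr_fun g_base x
  refine ⟨P, _, j, g, hj, g_base, (forall_mem_relators_iff w e g).2 ?_⟩
  simpa [g_base_apply, g] using ⟨h_root, h_link, h_base⟩

end KillingGen

/-- The generators of the group encoding the runs of a machine, where `unit i` stands for the unit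
translation of the register `i` and `input` for the translation setting up the input. -/
inductive MachineGen (B : ℕ) (Q ι : Type*)
  | unit (i : ι)
  | state (q : Option Q)
  | rule (r : Q × Fin B)
  | key
  | input

instance {B : ℕ} {Q ι : Type*} [Finite Q] [Finite ι] : Finite (MachineGen B Q ι) :=
  Finite.of_injective (β := ι ⊕ Option Q ⊕ (Q × Fin B) ⊕ Bool)
    (fun
      | .unit i => .inl i
      | .state q => .inr (.inl q)
      | .rule r => .inr (.inr (.inl r))
      | .key => .inr (.inr (.inr true))
      | .input => .inr (.inr (.inr false)))
    (by rintro (_ | _ | _ | _ | _) (_ | _ | _ | _ | _) h <;> simp_all)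

namespace MachineGen

open scoped commutatorElement

variable {B : ℕ} {Q ι : Type*}

/-- The relator expressing that the input consists of the number `n` in the register `i`. -/
def inputRelator (i : ι) (n : ℕ) : FreeGroup (MachineGen B Q ι) :=
  .of (unit i) ^ n * (.of input)⁻¹

/-- The commutator of the key and the initial configuration with initial state `q`. -/
def startCommutator (q : Q) : FreeGroup (MachineGen B Q ι) :=
  ⁅(.of key : FreeGroup (MachineGen B Q ι)), (.of input)⁻¹ * .of (state (some q)) * .of input⁆

/-- Generators of the free group all of which have degree one, if `key`, the states and the rules
have degree one and the translations have degree zero. -/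
def degreeOneGen : MachineGen B Q ι → FreeGroup (MachineGen B Q ι)
  | unit i => .of (unit i) * .of key
  | input => .of input * .of key
  | g => .of g

theorem closure_range_degreeOneGen :
    Subgroup.closure (Set.range (degreeOneGen (B := B) (Q := Q) (ι := ι))) = ⊤ := by
  let H := Subgroup.closure (Set.range (degreeOneGen (B := B) (Q := Q) (ι := ι)))
  have mem (g : MachineGen B Q ι) : degreeOneGen g ∈ H := Subgroup.subset_closure ⟨g, rfl⟩
  have key_mem : .of key ∈ H := mem key
  rw [eq_top_iff, ← FreeGroup.closure_range_of, Subgroup.closure_le]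
  rintro _ ⟨i | q | r | _ | _, rfl⟩
  · exact (H.mul_mem_cancel_right key_mem).1 (mem (unit i))
  · exact mem (state q)
  · exact mem (rule r)
  · exact key_mem
  · exact (H.mul_mem_cancel_right key_mem).1 (mem input)

end MachineGen

theorem semiconjBy_of_mulSingle {ι G : Type*} [Finite ι] [DecidableEq ι] {N : ι → Type*}
    [∀ i, Monoid (N i)] [Group G] {φ ψ : (∀ i, N i) →* G} {s : G}
    (h : ∀ i x, SemiconjBy s (φ (Pi.mulSingle i x)) (ψ (Pi.mulSingle i x))) (u : ∀ i, N i) :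
    SemiconjBy s (φ u) (ψ u) := by
  cases nonempty_fintype ι
  have conj_eq : (MulAut.conj s).toMonoidHom.comp φ = ψ :=
    MonoidHom.noncommPiCoprodEquiv.symm.injective <| Subtype.ext <| funext fun i =>
      MonoidHom.ext fun x => mul_inv_eq_of_eq_mul (h i x)
  exact mul_inv_eq_iff_eq_mul.1 (DFunLike.congr_fun conj_eq u)

theorem RuleSystem.Representation.trans_mulSingle {ι Q R G : Type*} [DecidableEq ι] [Group G]
    {S : RuleSystem (ι → Multiplicative ℤ) Q R} (ρ : S.Representation G) (i : ι) (n : ℕ) :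
    ρ.trans (Pi.mulSingle i (.ofAdd n)) = ρ.trans (Pi.mulSingle i (.ofAdd 1)) ^ n := by
  rw [← map_pow, ← Pi.mulSingle_pow, ← ofAdd_nsmul, nsmul_one]

namespace DigitMachine

universe u v

open MachineGen StateTransition
open scoped commutatorElement

variable {B : ℕ} {Q ι : Type*} [DecidableEq ι] (M : DigitMachine B Q ι)

/-- The relations defining a representation of the rules of `M`, together with the relation that
the key commutes with the configuration `(none, 1)`. -/
def relators : Set (FreeGroup (MachineGen B Q ι)) :=
  let x (i : ι) : FreeGroup (MachineGen B Q ι) := .of (unit i)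
  let t (q : Option Q) : FreeGroup (MachineGen B Q ι) := .of (state q)
  Set.range (fun p : ι × ι => semiconjRelator (x p.1) (x p.2) (x p.2)) ∪
    Set.range (fun p : (Q × Fin B) × ι => semiconjRelator (.of (rule p.1))
      (x p.2 ^ (Pi.mulSingle (M.register p.1.1) B : ι → ℕ) p.2)
      (x p.2 ^ (Pi.mulSingle (M.register p.1.1) (M.mul p.1.1 p.1.2) : ι → ℕ) p.2)) ∪
    Set.range (fun r : Q × Fin B => semiconjRelator (.of (rule r))
      ((x (M.register r.1) ^ (r.2 : ℕ))⁻¹ * t (some r.1) * x (M.register r.1) ^ (r.2 : ℕ))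
      ((x (M.register r.1) ^ M.add r.1 r.2)⁻¹ * t (M.next r.1 r.2) *
        x (M.register r.1) ^ M.add r.1 r.2)) ∪
    Set.range (fun r : Q × Fin B => semiconjRelator (.of key) (.of (rule r)) (.of (rule r))) ∪
    {semiconjRelator (.of key) (t none) (t none)}

theorem finite_relators [Finite Q] [Finite ι] : M.relators.Finite :=
  ((((Set.finite_range _).union (Set.finite_range _)).union (Set.finite_range _)).union
    (Set.finite_range _)).union (Set.finite_singleton _)

variable {G : Type*} [Group G]

theorem forall_mem_relators_iff (f : FreeGroup (MachineGen B Q ι) →* G) :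
    (∀ r ∈ M.relators, f r = 1) ↔
      (∀ i j, Commute (f (.of (unit i))) (f (.of (unit j)))) ∧
      (∀ (r : Q × Fin B) i, SemiconjBy (f (.of (rule r)))
        (f (.of (unit i)) ^ (Pi.mulSingle (M.register r.1) B : ι → ℕ) i)
        (f (.of (unit i)) ^ (Pi.mulSingle (M.register r.1) (M.mul r.1 r.2) : ι → ℕ) i)) ∧
      (∀ r : Q × Fin B, SemiconjBy (f (.of (rule r)))
        ((f (.of (unit (M.register r.1))) ^ (r.2 : ℕ))⁻¹ * f (.of (state (some r.1))) *
          f (.of (unit (M.register r.1))) ^ (r.2 : ℕ))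
        ((f (.of (unit (M.register r.1))) ^ M.add r.1 r.2)⁻¹ * f (.of (state (M.next r.1 r.2))) *
          f (.of (unit (M.register r.1))) ^ M.add r.1 r.2)) ∧
      (∀ r : Q × Fin B, Commute (f (.of key)) (f (.of (rule r)))) ∧
      Commute (f (.of key)) (f (.of (state none))) := by
  simp only [relators, Set.mem_union, or_imp, forall_and, Set.forall_mem_range,
    Set.mem_singleton_iff, forall_eq, map_semiconjRelator_eq_one_iff, map_mul, map_inv, map_pow,
    and_assoc, Prod.forall, Commute]

variable [NeZero B] {M}

/-- The homomorphism determined by a representation of the rules of a machine and an input. -/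
def genHom (ρ : M.ruleSystem.Representation G) (a : ι → Multiplicative ℤ) :
    FreeGroup (MachineGen B Q ι) →* G :=
  FreeGroup.lift fun
    | unit i => ρ.trans (Pi.mulSingle i (.ofAdd 1))
    | state q => ρ.state q
    | rule r => ρ.rule r
    | key => ρ.key
    | input => ρ.trans a

theorem genHom_eq_one_of_mem_relators {ρ : M.ruleSystem.Representation G}
    (h_key : Commute ρ.key (ρ.config (none, 1))) (a : ι → Multiplicative ℤ) :
    ∀ r ∈ M.relators, genHom ρ a r = 1 := by
  refine (M.forall_mem_relators_iff _).2
    ⟨fun i j => ?_, fun r i => ?_, fun r => ?_, fun r => ?_, ?_⟩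
  · simpa [genHom] using (Commute.all _ _).map ρ.trans
  · simpa [genHom, ruleSystem, scaleRegister_mulSingle, Pi.mulSingle_pow] using
      ρ.rule_trans r (Pi.mulSingle i (.ofAdd 1))
  · simpa [genHom, ruleSystem, ρ.trans_mulSingle] using ρ.rule_state r
  · simpa [genHom] using ρ.commute_key_rule r
  · simpa [genHom, RuleSystem.Representation.config] using h_key

theorem exists_representation [Finite ι] {f : FreeGroup (MachineGen B Q ι) →* G}
    (hf : ∀ r ∈ M.relators, f r = 1) :
    ∃ ρ : M.ruleSystem.Representation G,
      (∀ i, ρ.trans (Pi.mulSingle i (.ofAdd 1)) = f (.of (unit i))) ∧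
      (∀ q, ρ.state q = f (.of (state q))) ∧ ρ.key = f (.of key) := by
  cases nonempty_fintype ι
  obtain ⟨h_comm, h_trans, h_state, h_rule, -⟩ := (M.forall_mem_relators_iff f).1 hf
  let X : (ι → Multiplicative ℤ) →* G :=
    MonoidHom.noncommPiCoprod (fun i => zpowersHom G (f (.of (unit i))))
      fun i j _ m n => (h_comm i j).zpow_zpow _ _
  have X_single (i : ι) (m : Multiplicative ℤ) :
      X (Pi.mulSingle i m) = f (.of (unit i)) ^ m.toAdd :=
    MonoidHom.noncommPiCoprod_mulSingle ..
  have X_rule (r : Q × Fin B) := semiconjBy_of_mulSingle (s := f (.of (rule r)))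
    (φ := X.comp (M.ruleSystem.srcHom r)) (ψ := X.comp (M.ruleSystem.tgtHom r)) fun i m => by
      simpa [ruleSystem, scaleRegister_mulSingle, X_single, zpow_mul] using
        (h_trans r i).zpow_right m.toAdd
  exact ⟨{
    trans := X
    state q := f (.of (state q))
    rule r := f (.of (rule r))
    key := f (.of key)
    rule_trans := X_rule
    rule_state r := by simpa [X_single, ruleSystem] using h_state r
    commute_key_rule := h_rule }, fun i => by simp [X_single], fun _ => rfl, rfl⟩

theorem map_startCommutator_eq_one [Finite ι] {f : FreeGroup (MachineGen B Q ι) →* G}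
    (hf : ∀ r ∈ M.relators, f r = 1) {i : ι} {n : ℕ} (h_input : f (inputRelator i n) = 1) {q : Q}
    (h_halts : M.HaltsAtZero (some q, Pi.single i n)) : f (startCommutator q) = 1 := by
  obtain ⟨ρ, ρ_trans, ρ_state, ρ_key⟩ := exists_representation hf
  have h_none : Commute ρ.key (ρ.config (none, 1)) := by
    simpa [RuleSystem.Representation.config, ρ_state, ρ_key] using
      ((M.forall_mem_relators_iff f).1 hf).2.2.2.2
  have input_eq : f (.of input) = ρ.trans (Pi.mulSingle i (.ofAdd n)) := by
    rw [ρ.trans_mulSingle, ρ_trans, eq_comm, ← mul_inv_eq_one]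
    simpa [inputRelator] using h_input
  have h_start : Commute ρ.key (ρ.config (some q, Pi.mulSingle i (.ofAdd n))) :=
    M.mem_of_haltsAtZero ρ.invariant_setOf_commute_key h_none h_halts
  simpa [startCommutator, input_eq, ← ρ_state, ← ρ_key, commutatorElement_eq_one_iff_commute,
    map_commutatorElement, RuleSystem.Representation.config] using h_start

theorem genHom_startCommutator (ρ : M.ruleSystem.Representation G) (a : ι → Multiplicative ℤ)
    (q : Q) : genHom ρ a (startCommutator q) = ⁅ρ.key, ρ.config (some q, a)⁆ := by
  simp [startCommutator, genHom, map_commutatorElement, RuleSystem.Representation.config]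

theorem avoidsPowers_genHom_graded (ρ : M.ruleSystem.Representation G) (a : ι → Multiplicative ℤ)
    (q : Q) (g : MachineGen B Q ι) :
    AvoidsPowers (genHom ρ.graded a (degreeOneGen g)) (genHom ρ.graded a (startCommutator q)) := by
  refine .of_map (MonoidHom.snd G (Multiplicative ℤ)) ?_
  have degree_start : MonoidHom.snd _ _ (genHom ρ.graded a (startCommutator q)) = 1 := by
    rw [genHom_startCommutator, map_commutatorElement]
    exact commutatorElement_eq_one_iff_commute.2 (.all _ _)
  have degree_gen : MonoidHom.snd _ _ (genHom ρ.graded a (degreeOneGen g)) = .ofAdd 1 := by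
    cases g <;> simp [genHom, degreeOneGen, RuleSystem.Representation.graded]
  rw [degree_start, degree_gen]
  intro n hn
  simpa [← ofAdd_zsmul] using hn

theorem exists_hom_of_not_haltsAtZero {Q : Type u} {ι : Type v} [DecidableEq ι]
    {M : DigitMachine B Q ι} {i : ι} {n : ℕ} {q : Q} (h : ¬M.HaltsAtZero (some q, Pi.single i n)) :
    ∃ (G : Type max u v) (_ : Group G) (f : FreeGroup (MachineGen B Q ι) →* G),
      (∀ r ∈ M.relators, f r = 1) ∧ f (inputRelator i n) = 1 ∧
      ¬IsOfFinOrder (f (startCommutator q)) ∧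
      ∀ g, AvoidsPowers (f (degreeOneGen g)) (f (startCommutator q)) := by
  let ρ := RuleSystem.model M.invariant_setOf_haltsAtZero
  let a : ι → Multiplicative ℤ := Pi.mulSingle i (.ofAdd n)
  have h_none : M.HaltsAtZero (none, 0) := mem_eval.2 ⟨.refl, rfl⟩
  have h_key : Commute ρ.graded.key (ρ.graded.config (none, 1)) := by
    rw [ρ.graded_config]
    exact Prod.ext (RuleSystem.commute_model_key_config _ h_none) rfl
  refine ⟨_, _, genHom ρ.graded a, genHom_eq_one_of_mem_relators h_key a, ?_, fun h_fin => ?_,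
    avoidsPowers_genHom_graded ρ a q⟩
  · simp [inputRelator, genHom, a, ρ.graded.trans_mulSingle i n]
  · have h_start : (some q, a) ∉ {C | M.HaltsAtZero (toCfg C)} := h
    refine RuleSystem.not_isOfFinOrder_model_key_config M.invariant_setOf_haltsAtZero h_start ?_
    have h_fst := (MonoidHom.fst _ (Multiplicative ℤ)).isOfFinOrder h_fin
    rwa [genHom_startCommutator, map_commutatorElement, ρ.graded_config] at h_fst

end DigitMachine

section PresentedGroup

variable {α β : Type*}

theorem eq_one_of_subsingleton_presentedGroup {G : Type*} [Group G] {R : Set (FreeGroup α)}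
    [Subsingleton (PresentedGroup R)] {f : FreeGroup α →* G} (hf : ∀ r ∈ R, f r = 1) : f = 1 :=
  MonoidHom.ext fun x => by
    have h_mem : x ∈ Subgroup.normalClosure R :=
      (QuotientGroup.eq_one_iff x).1 (Subsingleton.elim (PresentedGroup.mk R x) 1)
    exact Subgroup.normalClosure_le_normal (N := f.ker) hf h_mem

theorem nontrivial_presentedGroup_of_hom {G : Type*} [Group G] {R : Set (FreeGroup α)}
    {f : FreeGroup α →* G} (hf : ∀ r ∈ R, f r = 1) {x : FreeGroup α} (hx : f x ≠ 1) :
    Nontrivial (PresentedGroup R) := by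
  by_contra h
  rw [not_nontrivial_iff_subsingleton] at h
  exact hx (DFunLike.congr_fun (eq_one_of_subsingleton_presentedGroup hf) x)

theorem subsingleton_presentedGroup {R : Set (FreeGroup α)} (h : PresentedGroup.mk R = 1) :
    Subsingleton (PresentedGroup R) :=
  ⟨(PresentedGroup.mk_surjective R).forall₂.2 fun x y => by simp [h]⟩

/-- The elements of the free group given by a list of words. -/
def wordRelators (L : List (List (α × Bool))) : Set (FreeGroup α) :=
  FreeGroup.mk '' {w | w ∈ L}

/-- Renaming of the letters in a list of words. -/
def relabel (e : α → β) (L : List (List (α × Bool))) : List (List (β × Bool)) :=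
  L.map (List.map (Prod.map e id))

theorem primrec_relabel [Finite α] [Primcodable α] [Primcodable β] (e : α → β) :
    Primrec (relabel e) :=
  Primrec.list_map .id <| Primrec.list_map .snd <|
    (((Primrec.dom_finite e).comp (Primrec.fst.comp .snd)).pair (Primrec.snd.comp .snd)).to₂

theorem forall_wordRelators_relabel_iff {G : Type*} [Group G] {e : α → β}
    {L : List (List (α × Bool))} {f : FreeGroup β →* G} :
    (∀ r ∈ wordRelators (relabel e L), f r = 1) ↔
      ∀ r ∈ wordRelators L, f.comp (FreeGroup.map e) r = 1 := by
  simp [wordRelators, relabel, Prod.map_def]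

/-- A word representing `a ^ n * b⁻¹`. -/
def powMulInvWord (a b : α) (n : ℕ) : List (α × Bool) :=
  (List.cons (a, true))^[n] [(b, false)]

theorem mk_powMulInvWord (a b : α) (n : ℕ) :
    FreeGroup.mk (powMulInvWord a b n) = .of a ^ n * (.of b)⁻¹ := by
  induction n with
  | zero => simp [powMulInvWord, FreeGroup.of, FreeGroup.invRev]
  | succ n ih =>
    rw [pow_succ', mul_assoc, ← ih, powMulInvWord, iterate_succ_apply', FreeGroup.of,
      FreeGroup.mul_mk]
    rfl

theorem primrec_powMulInvWord [Primcodable α] (a b : α) : Primrec (powMulInvWord a b) :=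
  Primrec.nat_iterate .id (.const _) (Primrec.list_cons.comp (.const _) .snd).to₂

theorem exists_primrec_presentation [Finite α] {R : Set (FreeGroup α)} (hR : R.Finite) (a b : α) :
    ∃ (m : ℕ) (W : ℕ → List (List (Fin m × Bool))), Primrec W ∧ ∀ n, Nonempty
      (PresentedGroup (wordRelators (W n)) ≃*
        PresentedGroup (insert (.of a ^ n * (.of b)⁻¹) R)) := by
  obtain ⟨m, ⟨e⟩⟩ := Finite.exists_equiv_fin α
  let φ := FreeGroup.freeGroupCongr e
  let W (n : ℕ) := powMulInvWord (e a) (e b) n :: hR.toFinset.toList.map fun r => (φ r).toWord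
  have relators_W (n : ℕ) : wordRelators (W n) = φ '' insert (.of a ^ n * (.of b)⁻¹) R := by
    ext x
    simp [wordRelators, W, φ, mk_powMulInvWord, FreeGroup.mk_toWord, eq_comm]
  refine ⟨m, W, Primrec.list_cons.comp (primrec_powMulInvWord _ _) (.const _), fun n => ⟨?_⟩⟩
  rw [relators_W]
  exact (PresentedGroup.equivPresentedGroup _ e).symm

end PresentedGroup

theorem MachineGen.map_base_inputRelator {B : ℕ} {Q ι I : Type*} (i : ι) (n : ℕ) :
    FreeGroup.map (KillingGen.base (I := I)) (inputRelator (B := B) (Q := Q) i n) =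
      .of (.base (unit i)) ^ n * (.of (.base input))⁻¹ := by
  simp [inputRelator]

namespace DigitMachine

open MachineGen KillingGen

variable {B : ℕ} {Q ι : Type*} [DecidableEq ι] (M : DigitMachine B Q ι)

/-- The relators which, together with the relator that provides the input, present the trivial
group if and only if `M` halts at zero when started in the state `q`. -/
def haltingRelators (q : Q) :
    Set (FreeGroup (KillingGen (MachineGen B Q ι) (MachineGen B Q ι))) :=
  KillingGen.relators (startCommutator q) degreeOneGen ∪ FreeGroup.map base '' M.relators

theorem finite_haltingRelators [Finite Q] [Finite ι] (q : Q) : (M.haltingRelators q).Finite :=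
  (KillingGen.finite_relators _ _).union (M.finite_relators.image _)

variable [NeZero B] {M} {q : Q} {i : ι} {n : ℕ}

theorem subsingleton_presentedGroup_of_haltsAtZero [Finite ι]
    (h : M.HaltsAtZero (some q, Pi.single i n)) :
    Subsingleton (PresentedGroup
      (insert (.of (base (unit i)) ^ n * (.of (base input))⁻¹) (M.haltingRelators q))) := by
  rw [← map_base_inputRelator]
  set R := insert (FreeGroup.map base (inputRelator i n)) (M.haltingRelators q)
  have mk_relator {r} (hr : r ∈ M.haltingRelators q) : PresentedGroup.mk R r = 1 :=
    PresentedGroup.one_of_mem (Set.mem_insert_of_mem _ hr)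
  have mk_start : (PresentedGroup.mk R).comp (FreeGroup.map base) (startCommutator q) = 1 :=
    map_startCommutator_eq_one (f := (PresentedGroup.mk R).comp (FreeGroup.map base))
      (fun r hr => mk_relator (.inr ⟨r, hr, rfl⟩))
      (PresentedGroup.one_of_mem (Set.mem_insert _ _)) h
  exact subsingleton_presentedGroup <|
    eq_one_of_base_eq_one closure_range_degreeOneGen (fun r hr => mk_relator (.inl hr)) mk_start

theorem nontrivial_presentedGroup_of_not_haltsAtZero
    (h : ¬M.HaltsAtZero (some q, Pi.single i n)) :
    Nontrivial (PresentedGroup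
      (insert (.of (base (unit i)) ^ n * (.of (base input))⁻¹) (M.haltingRelators q))) := by
  obtain ⟨G, _, f, f_relators, f_input, f_start, f_gen⟩ := exists_hom_of_not_haltsAtZero h
  obtain ⟨P, _, j, g, hj, g_base, g_relators⟩ :=
    exists_lift_of_avoidsPowers (e := degreeOneGen) f f_start f_gen
  have g_base_apply (x : FreeGroup (MachineGen B Q ι)) : g (FreeGroup.map base x) = j (f x) :=
    DFunLike.congr_fun g_base x
  have g_start : g (FreeGroup.map base (startCommutator q)) ≠ 1 := by
    rw [g_base_apply, map_ne_one_iff j hj]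
    exact fun h_one => f_start (h_one ▸ .one)
  refine nontrivial_presentedGroup_of_hom (f := g) ?_ g_start
  rw [← map_base_inputRelator]
  rintro _ (rfl | h_mem | ⟨r, hr, rfl⟩)
  · rw [g_base_apply, f_input, map_one]
  · exact g_relators _ h_mem
  · rw [g_base_apply, f_relators r hr, map_one]

theorem exists_primrec_presentation_nontrivial_iff [Finite Q] [Finite ι]
    (M : DigitMachine B Q ι) (q : Q) (i : ι) :
    ∃ (m : ℕ) (W : ℕ → List (List (Fin m × Bool))), Primrec W ∧ ∀ n,
      Nontrivial (PresentedGroup (wordRelators (W n))) ↔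
        ¬M.HaltsAtZero (some q, Pi.single i n) := by
  obtain ⟨m, W, hW, h_equiv⟩ :=
    exists_primrec_presentation (M.finite_haltingRelators q) (base (unit i)) (base input)
  refine ⟨m, W, hW, fun n => ?_⟩
  rw [(h_equiv n).some.toEquiv.nontrivial_congr]
  refine ⟨fun h_nontriv h => ?_, nontrivial_presentedGroup_of_not_haltsAtZero⟩
  have := subsingleton_presentedGroup_of_haltsAtZero h
  exact not_nontrivial _ h_nontriv

end DigitMachine

/-- The number whose base-`B` digits are the symbols of a stack, the top symbol being the last
digit. -/
def stackCode {Γ : Type*} {B : ℕ} (digit : Option Γ ≃ Fin B) (L : List Γ) : ℕ :=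
  Nat.ofDigits B (L.map fun a => (digit (some a) : ℕ))

section StackCode

variable {Γ : Type*} {B : ℕ} (digit : Option Γ ≃ Fin B)

@[simp]
theorem stackCode_nil : stackCode digit [] = 0 := rfl

@[simp]
theorem stackCode_cons (a : Γ) (L : List Γ) :
    stackCode digit (a :: L) = B * stackCode digit L + digit (some a) := by
  simp [stackCode, Nat.ofDigits_cons, add_comm]

/-- The codes of all the stacks of a machine. -/
def stackCodes {K : Type*} (S : K → List Γ) (k : K) : ℤ := stackCode digit (S k)

theorem stackCodes_eq {K : Type*} [NeZero B] (h_none : digit none = 0) (S : K → List Γ) (k : K) :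
    stackCodes digit S k = B * stackCode digit (S k).tail + (digit (S k).head? : ℕ) := by
  cases h : S k <;> simp [stackCodes, h, h_none]

theorem stackCodes_update {K : Type*} [DecidableEq K] (S : K → List Γ) (k : K) (L : List Γ) :
    stackCodes digit (update S k L) = update (stackCodes digit S) k (stackCode digit L : ℤ) :=
  comp_update (fun L => (stackCode digit L : ℤ)) S k L

theorem update_stackCodes_self {K : Type*} [DecidableEq K] [NeZero B] (h_none : digit none = 0)
    (S : K → List Γ) (k : K) :
    update (stackCodes digit S) k
      (B * stackCode digit (S k).tail + (digit (S k).head? : ℕ)) = stackCodes digit S :=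
  update_eq_self_iff.2 (stackCodes_eq digit h_none S k).symm

theorem exists_digit (Γ : Type*) [Finite Γ] :
    ∃ (B : ℕ) (_ : NeZero B) (digit : Option Γ ≃ Fin B), digit none = 0 := by
  obtain ⟨_ | B, ⟨e⟩⟩ := Finite.exists_equiv_fin (Option Γ)
  · exact (e none).elim0
  · exact ⟨B + 1, inferInstance, e.trans (Equiv.swap (e none) 0), by simp⟩

end StackCode

namespace DigitMachine

open StateTransition Turing

section Restrict

variable {B : ℕ} {Q ι : Type*} (M : DigitMachine B Q ι)

/-- The restriction of a machine to a set of states closed under transitions. -/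
def restrict (S : Set Q) (hS : ∀ q ∈ S, ∀ d, ∀ q' ∈ M.next q d, q' ∈ S) : DigitMachine B S ι where
  register q := M.register q
  next q d := (M.next q d).pmap Subtype.mk (hS q q.2 d)
  mul q := M.mul q
  add q := M.add q
  mul_ne_zero q := M.mul_ne_zero q

theorem haltsAtZero_restrict_iff [NeZero B] [DecidableEq ι] {S : Set Q}
    (hS : ∀ q ∈ S, ∀ d, ∀ q' ∈ M.next q d, q' ∈ S) (C : Option S × (ι → ℤ)) :
    (M.restrict S hS).HaltsAtZero C ↔ M.HaltsAtZero (C.1.map Subtype.val, C.2) := by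
  let emb (C : Option S × (ι → ℤ)) : Option Q × (ι → ℤ) := (C.1.map Subtype.val, C.2)
  have respects : Respects (M.restrict S hS).step M.step fun C D => emb C = D := by
    refine fun_respects.2 ?_
    rintro ⟨_ | q, v⟩
    · rfl
    · exact .single (by simp only [emb, step, restrict, Option.map_pmap]; simp)
  change _ ↔ (none, 0) ∈ eval M.step (emb C)
  rw [tr_eval' _ _ _ respects, Part.map_eq_map, Part.mem_map_iff, HaltsAtZero]
  refine ⟨fun h => ⟨_, h, rfl⟩, ?_⟩
  rintro ⟨⟨_ | q, v⟩, h, h_eq⟩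
  · obtain rfl : v = 0 := congrArg Prod.snd h_eq
    exact h
  · simp [emb] at h_eq

end Restrict

section TM2

section Labels

variable {K Γ Λ σ : Type*} (M : Λ → TM2.Stmt (fun _ : K => Γ) Λ σ)

/-- The pairs of a statement occurring in the program of one of the labels in `S` and a value of the
local store. -/
def statesOfLabels (S : Finset Λ) : Set (TM2.Stmt (fun _ : K => Γ) Λ σ × σ) :=
  {q | ∃ l ∈ S, q.1 ∈ TM2.stmts₁ (M l)}

theorem finite_statesOfLabels [Finite σ] (S : Finset Λ) : Finite (statesOfLabels M S) := by
  classical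
  refine ((S.biUnion fun l => TM2.stmts₁ (M l)).finite_toSet.prod Set.finite_univ).subset ?_
  rintro q ⟨l, hl, hq⟩
  exact ⟨Finset.mem_coe.2 (Finset.mem_biUnion.2 ⟨l, hl, hq⟩), Set.mem_univ _⟩

end Labels

variable {K Γ Λ σ : Type*} [Inhabited K] {B : ℕ} [NeZero B] (digit : Option Γ ≃ Fin B)
  (M : Λ → TM2.Stmt (fun _ : K => Γ) Λ σ)

/-- The machine whose registers are the codes of the stacks of a multi-stack machine. Statements
that do not access a stack read the default register and leave it unchanged. -/
def ofTM2 : DigitMachine B (TM2.Stmt (fun _ : K => Γ) Λ σ × σ) K where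
  register
    | (.push k _ _, _) | (.peek k _ _, _) | (.pop k _ _, _) => k
    | _ => default
  next
    | (.push _ _ q, v), _ => some (q, v)
    | (.peek _ f q, v), d | (.pop _ f q, v), d => some (q, f v (digit.symm d))
    | (.load f q, v), _ => some (q, f v)
    | (.branch f q₁ q₂, v), _ => some (cond (f v) q₁ q₂, v)
    | (.goto l, v), _ => some (M (l v), v)
    | (.halt, _), _ => none
  mul
    | (.push .., _), _ => B ^ 2
    | (.pop .., _), _ => 1
    | _, _ => B
  add
    | (.push _ f _, v), d => B * d + digit (some (f v))
    | (.pop .., _), _ => 0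
    | _, d => d
  mul_ne_zero q _ := by
    have := NeZero.ne B
    split <;> simp_all

/-- The configuration of `ofTM2` corresponding to a configuration of the multi-stack machine. -/
def ofTM2Cfg (C : TM2.Cfg (fun _ : K => Γ) Λ σ) :
    Option (TM2.Stmt (fun _ : K => Γ) Λ σ × σ) × (K → ℤ) :=
  (C.l.map fun l => (M l, C.var), stackCodes digit C.stk)

variable {digit}

theorem mem_stmts₁_of_mem_next {q q' : TM2.Stmt (fun _ : K => Γ) Λ σ × σ} {d : Fin B}
    (h : q' ∈ (ofTM2 digit M).next q d) :
    q'.1 ∈ TM2.stmts₁ q.1 ∨ ∃ l, q.1 = .goto l ∧ q'.1 = M (l q.2) := by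
  obtain ⟨_ | _ | _ | _ | ⟨f, q₁, q₂⟩ | l | _, v⟩ := q
  case goto => exact .inr ⟨l, rfl, by cases h; rfl⟩
  case halt => cases h
  case branch =>
    cases h
    cases f v <;> simp [TM2.stmts₁, TM2.stmts₁_self]
  all_goals
    cases h
    simp [TM2.stmts₁, TM2.stmts₁_self]

theorem next_mem_statesOfLabels {S : Finset Λ} (hS : ∀ l ∈ S, TM2.SupportsStmt S (M l))
    {q q' : TM2.Stmt (fun _ : K => Γ) Λ σ × σ} (hq : q ∈ statesOfLabels M S) {d : Fin B}
    (h : q' ∈ (ofTM2 digit M).next q d) : q' ∈ statesOfLabels M S := by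
  obtain ⟨l, hl, hql⟩ := hq
  obtain h_sub | ⟨f, h_goto, h_eq⟩ := mem_stmts₁_of_mem_next M h
  · exact ⟨l, hl, TM2.stmts₁_trans hql h_sub⟩
  · have h_supp := TM2.stmts₁_supportsStmt_mono hql (hS l hl)
    rw [h_goto] at h_supp
    exact ⟨f q.2, h_supp q.2, h_eq ▸ TM2.stmts₁_self⟩

variable [DecidableEq K]

theorem step_ofTM2 (h_none : digit none = 0) (q : TM2.Stmt (fun _ : K => Γ) Λ σ × σ)
    (S : K → List Γ) :
    let N := ofTM2 digit M
    let L := S (N.register q)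
    N.step (some q, stackCodes digit S) = some (N.next q (digit L.head?),
      update (stackCodes digit S) (N.register q)
        (N.mul q (digit L.head?) * stackCode digit L.tail + N.add q (digit L.head?))) :=
  step_of_register_eq _ (stackCodes_eq digit h_none S _)

theorem reaches₁_ofTM2 (h_none : digit none = 0) (q : TM2.Stmt (fun _ : K => Γ) Λ σ) (v : σ)
    (S : K → List Γ) :
    Reaches₁ (ofTM2 digit M).step (some (q, v), stackCodes digit S)
      (ofTM2Cfg digit M (TM2.stepAux q v S)) := by
  induction q generalizing v S with
  | push k f q ih =>
    refine .head ((step_ofTM2 M h_none _ S).trans ?_) (ih v _)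
    have code_cons : (stackCode digit (f v :: S k) : ℤ) =
        B ^ 2 * stackCode digit (S k).tail +
          (B * (digit (S k).head? : ℕ) + (digit (some (f v)) : ℕ)) := by
      rw [stackCode_cons, Nat.cast_add, Nat.cast_mul, ← stackCodes, stackCodes_eq digit h_none]
      ring
    simp [ofTM2, stackCodes_update, code_cons, -stackCode_cons]
  | peek k f q ih =>
    refine .head ((step_ofTM2 M h_none _ S).trans ?_) (ih _ S)
    simp [ofTM2, update_stackCodes_self, h_none]
  | pop k f q ih =>
    refine .head ((step_ofTM2 M h_none _ S).trans ?_) (ih _ _)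
    simp [ofTM2, stackCodes_update]
  | load f q ih =>
    refine .head ((step_ofTM2 M h_none _ S).trans ?_) (ih _ S)
    simp [ofTM2, update_stackCodes_self, h_none]
  | branch f q₁ q₂ ih₁ ih₂ =>
    have ih : Reaches₁ (ofTM2 digit M).step
        (some (cond (f v) q₁ q₂, v), stackCodes digit S)
        (ofTM2Cfg digit M (TM2.stepAux (.branch f q₁ q₂) v S)) := by
      cases h : f v <;> simp [h, ih₁, ih₂]
    refine .head ((step_ofTM2 M h_none _ S).trans ?_) ih
    simp [ofTM2, update_stackCodes_self, h_none]
  | goto l =>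
    refine .single ((step_ofTM2 M h_none _ S).trans ?_)
    simp [ofTM2, ofTM2Cfg, update_stackCodes_self, h_none]
  | halt =>
    refine .single ((step_ofTM2 M h_none _ S).trans ?_)
    simp [ofTM2, ofTM2Cfg, update_stackCodes_self, h_none]

theorem haltsAtZero_ofTM2_iff (h_none : digit none = 0) (C : TM2.Cfg (fun _ : K => Γ) Λ σ) :
    (ofTM2 digit M).HaltsAtZero (ofTM2Cfg digit M C) ↔
      ∃ D ∈ eval (TM2.step M) C, ofTM2Cfg digit M D = (none, 0) := by
  have respects : Respects (TM2.step M) (ofTM2 digit M).step fun C D => ofTM2Cfg digit M C = D := by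
    refine fun_respects.2 ?_
    rintro ⟨_ | l, v, S⟩
    · rfl
    · exact reaches₁_ofTM2 M h_none (M l) v S
  rw [HaltsAtZero, tr_eval' _ _ _ respects, Part.map_eq_map, Part.mem_map_iff]

end TM2

end DigitMachine

section InputCode

open Turing.PartrecToTM2

variable {B : ℕ} (digit : Option Γ' ≃ Fin B)

theorem exists_posNum_cast_eq {n : ℕ} (hn : n ≠ 0) : ∃ p : PosNum, (p : ℕ) = n := by
  have h_cast := Num.to_of_nat n
  cases h : (n : Num) with
  | zero => simp_all
  | pos p => exact ⟨p, by rwa [h] at h_cast⟩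

theorem trNat_of_ne_zero {n : ℕ} (hn : n ≠ 0) :
    trNat n = (if n % 2 = 0 then Γ'.bit0 else Γ'.bit1) :: trNat (n / 2) := by
  have trNat_cast (p : PosNum) : trNat p = trPosNum p := by simp [trNat, trNum]
  obtain ⟨p, rfl⟩ := exists_posNum_cast_eq hn
  cases p with
  | one => rfl
  | bit0 p =>
    have h_cast : (p.bit0 : ℕ) = 2 * p := by rw [PosNum.cast_bit0, two_mul]
    rw [trNat_cast, h_cast, Nat.mul_div_cancel_left _ two_pos, trNat_cast]
    simp [trPosNum]
  | bit1 p =>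
    have h_cast : (p.bit1 : ℕ) = 2 * p + 1 := by rw [PosNum.cast_bit1, two_mul]
    have h_div : (2 * (p : ℕ) + 1) / 2 = p := by omega
    rw [trNat_cast, h_cast, h_div, trNat_cast]
    simp [trPosNum]

theorem stackCode_trList_singleton {n : ℕ} (hn : n ≠ 0) :
    stackCode digit (trList [n]) = B * stackCode digit (trList [n / 2]) +
      digit (some (if n % 2 = 0 then Γ'.bit0 else Γ'.bit1)) := by
  simp only [trList, trNat_of_ne_zero hn, List.cons_append, stackCode_cons]

theorem primrec_stackCode_trList_singleton : Primrec fun n => stackCode digit (trList [n]) := by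
  let F (L : List ℕ) : Option ℕ :=
    if L.length = 0 then some (digit (some Γ'.cons)) else
      L[L.length / 2]?.map fun x =>
        B * x + digit (some (if L.length % 2 = 0 then Γ'.bit0 else Γ'.bit1))
  have hF : Primrec F := by
    have length_eq_zero : PrimrecPred fun L : List ℕ => L.length = 0 :=
      Primrec.eq.comp .list_length (.const 0)
    have length_even : PrimrecPred fun L : List ℕ => L.length % 2 = 0 :=
      Primrec.eq.comp (Primrec.nat_mod.comp .list_length (.const 2)) (.const 0)
    have last_digit : Primrec fun L : List ℕ =>
        (digit (some (if L.length % 2 = 0 then Γ'.bit0 else Γ'.bit1)) : ℕ) := by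
      simpa only [apply_ite fun a => (digit (some a) : ℕ)] using
        Primrec.ite length_even (.const _) (.const _)
    exact .ite length_eq_zero (.const _) (.option_map
      (Primrec.list_getElem?.comp .id (Primrec.nat_div.comp .list_length (.const 2)))
      (Primrec.nat_add.comp (Primrec.nat_mul.comp (.const B) .snd) (last_digit.comp .fst)))
  refine (Primrec.nat_strong_rec (fun _ : Unit => fun n => stackCode digit (trList [n]))
    (hF.comp .snd).to₂ fun _ n => ?_).comp (.const ()) .id
  by_cases hn : n = 0
  · simp [F, hn]
  · have h_lt : n / 2 < n := by omega
    rw [stackCode_trList_singleton digit hn]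
    simp [F, hn, h_lt]

end InputCode

section Undecidability

open Turing Turing.PartrecToTM2

theorem exists_code_eval_eq_assert {p : ℕ → Prop} (hp : REPred p) :
    ∃ c : ToPartrec.Code, ∀ n, c.eval [n] = Part.assert (p n) fun _ => Part.some [] := by
  have h_partrec : Partrec fun n => Part.assert (p n) fun _ => Part.some 0 := by
    refine (hp.map (Computable.const 0).to₂).of_eq fun n => ?_
    ext
    simp [eq_comm]
  obtain ⟨c, hc⟩ := ToPartrec.Code.exists_code (Nat.Partrec'.part_iff₁.2 h_partrec)
  refine ⟨ToPartrec.Code.nil.comp c, fun n => ?_⟩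
  have hcn : c.eval [n] = Part.map pure (Part.assert (p n) fun _ => Part.some 0) :=
    hc ⟨[n], rfl⟩
  ext
  rw [ToPartrec.Code.comp_eval]
  refine Part.mem_bind_iff.trans ?_
  simp [hcn]

variable {B : ℕ} (digit : Option Γ' ≃ Fin B)

theorem stackCodes_elim_main (L : List Γ') :
    stackCodes digit (K'.elim L [] [] []) = Pi.single K'.main (stackCode digit L : ℤ) := by
  ext k
  cases k <;> simp [stackCodes]

theorem exists_digitMachine_haltsAtZero_iff {p : ℕ → Prop} (hp : REPred p) :
    ∃ (B : ℕ) (_ : NeZero B) (Q : Type) (_ : Finite Q) (M : DigitMachine B Q K') (q : Q)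
      (code : ℕ → ℕ), Primrec code ∧
        ∀ n, M.HaltsAtZero (some q, Pi.single K'.main (code n : ℤ)) ↔ p n := by
  obtain ⟨c, hc⟩ := exists_code_eval_eq_assert hp
  obtain ⟨B, _, digit, h_none⟩ := exists_digit Γ'
  obtain ⟨h_start, h_supports⟩ := tr_supports c Cont'.halt
  let S := codeSupp c Cont'.halt
  let q₀ : DigitMachine.statesOfLabels tr S :=
    ⟨(tr (trNormal c Cont'.halt), default), trNormal c Cont'.halt, h_start, TM2.stmts₁_self⟩
  refine ⟨B, ‹_›, _, DigitMachine.finite_statesOfLabels tr S,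
    (DigitMachine.ofTM2 digit tr).restrict _ fun q hq d q' =>
      DigitMachine.next_mem_statesOfLabels tr h_supports hq,
    q₀, _, primrec_stackCode_trList_singleton digit, fun n => ?_⟩
  have h_init : DigitMachine.ofTM2Cfg digit tr (init c [n]) =
      (some q₀.1, Pi.single K'.main (stackCode digit (trList [n]) : ℤ)) :=
    Prod.ext rfl (stackCodes_elim_main digit _)
  have h_halt : DigitMachine.ofTM2Cfg digit tr (halt []) = (none, 0) :=
    Prod.ext rfl ((stackCodes_elim_main digit _).trans (by simp [trList]))
  refine (DigitMachine.haltsAtZero_restrict_iff _ _ _).trans ?_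
  change (DigitMachine.ofTM2 digit tr).HaltsAtZero (some q₀.1, _) ↔ _
  rw [← h_init]
  refine (DigitMachine.haltsAtZero_ofTM2_iff tr h_none (init c [n])).trans ?_
  rw [tr_eval, hc]
  refine ⟨fun ⟨D, hD, _⟩ => ?_, fun h => ⟨_, Part.mem_map halt (Part.mem_assert h ?_), h_halt⟩⟩
  · obtain ⟨_, hv, _⟩ := (Part.mem_map_iff _).1 hD
    exact (Part.mem_assert_iff.1 hv).1
  · exact Part.mem_some []

theorem exists_primrec_presentation_nontrivial_iff_not {p : ℕ → Prop} (hp : REPred p) :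
    ∃ (m : ℕ) (W : ℕ → List (List (Fin m × Bool))), Primrec W ∧
      ∀ n, Nontrivial (PresentedGroup (wordRelators (W n))) ↔ ¬p n := by
  have : Finite K' := Set.finite_univ_iff.1 <|
    (Set.toFinite {.main, .rev, .aux, .stack}).subset fun k _ => by cases k <;> simp
  obtain ⟨B, _, Q, _, M, q, code, h_code, hM⟩ := exists_digitMachine_haltsAtZero_iff hp
  obtain ⟨m, W, hW, hW_iff⟩ := M.exists_primrec_presentation_nontrivial_iff q K'.main
  exact ⟨m, W ∘ code, hW.comp h_code, fun n => (hW_iff _).trans (hM n).not⟩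

end Undecidability

theorem lift_mk_eq_one {α G : Type*} [Group G] {f : α → G} {w : List (α × Bool)}
    (h : ∀ x ∈ w, f x.1 = 1) : FreeGroup.lift f (FreeGroup.mk w) = 1 := by
  rw [FreeGroup.lift_mk]
  refine List.prod_eq_one fun y hy => ?_
  obtain ⟨x, hx, rfl⟩ := List.mem_map.1 hy
  cases x.2 <;> simp [h x hx]

theorem mem_range_of_mem_relabel {α β : Type*} {e : α → β} {L : List (List (α × Bool))}
    {w : List (β × Bool)} (hw : w ∈ relabel e L) {x : β × Bool} (hx : x ∈ w) :
    x.1 ∈ Set.range e := by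
  obtain ⟨_, _, rfl⟩ := List.mem_map.1 hw
  obtain ⟨y, _, rfl⟩ := List.mem_map.1 hx
  exact ⟨y.1, rfl⟩

section EncodedPresentation

variable {α : Type*} {P : ℕ × List (List (ℕ × Bool))} {e : α → ℕ} {L : List (List (α × Bool))}

theorem presProj_of_eq_one (hL : relabel e L ⊆ P.2)
    [Subsingleton (PresentedGroup (wordRelators L))] (i : α) :
    presProj P (FreeGroup.of (e i)) = 1 := by
  have kills_words : ∀ r ∈ wordRelators (relabel e L), presProj P r = 1 := by
    rintro _ ⟨w, hw, rfl⟩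
    exact PresentedGroup.one_of_mem (.inl ⟨w, hL hw, rfl⟩)
  have h_one :=
    eq_one_of_subsingleton_presentedGroup (forall_wordRelators_relabel_iff.1 kills_words)
  simpa using DFunLike.congr_fun h_one (FreeGroup.of i)

theorem nontrivial_presGroup (he : Injective e) (he_lt : ∀ i, e i < P.1)
    (hP : ∀ w ∈ P.2, w ∈ relabel e L ∨ ∀ x ∈ w, x.1 ∉ Set.range e)
    [Nontrivial (PresentedGroup (wordRelators L))] : Nontrivial (presGroup P) := by
  let f : FreeGroup ℕ →* PresentedGroup (wordRelators L) :=
    FreeGroup.lift (extend e PresentedGroup.of 1)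
  have extend_one (j : ℕ) (hj : j ∉ Set.range e) :
      extend e (PresentedGroup.of (rels := wordRelators L)) 1 j = 1 := extend_apply' _ _ _ hj
  have f_comp : f.comp (FreeGroup.map e) = PresentedGroup.mk (wordRelators L) := by
    ext i
    simp [f, he.extend_apply, PresentedGroup.of]
  have f_relabel : ∀ r ∈ wordRelators (relabel e L), f r = 1 :=
    forall_wordRelators_relabel_iff.2 fun r hr => f_comp ▸ PresentedGroup.one_of_mem hr
  have f_relators : ∀ r ∈ presRels P, f r = 1 := by
    rintro _ (⟨w, hw, rfl⟩ | ⟨j, hj, rfl⟩)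
    · obtain h_mem | h_avoid := hP w hw
      · exact f_relabel _ ⟨w, h_mem, rfl⟩
      · exact lift_mk_eq_one fun x hx => extend_one _ (h_avoid x hx)
    · exact FreeGroup.lift_apply_of.trans <| extend_one j fun ⟨i, hi⟩ => (he_lt i).not_ge (hi ▸ hj)
  obtain ⟨y, hy⟩ := exists_ne (1 : PresentedGroup (wordRelators L))
  obtain ⟨x, rfl⟩ := PresentedGroup.mk_surjective _ y
  rw [← f_comp] at hy
  exact nontrivial_presentedGroup_of_hom f_relators hy

end EncodedPresentation

/-- An encoded presentation of the free product of the groups presented by two lists of words: the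
generators of the first factor come first. -/
def coprodPresentation {m m' : ℕ} (L : List (List (Fin m × Bool)))
    (L' : List (List (Fin m' × Bool))) : ℕ × List (List (ℕ × Bool)) :=
  (m + m', relabel Fin.val L ++ relabel (fun i => m + i.val) L')

section coprodPresentation

variable {m m' : ℕ} {L : List (List (Fin m × Bool))} {L' : List (List (Fin m' × Bool))}

theorem primrec₂_coprodPresentation : Primrec₂ (coprodPresentation (m := m) (m' := m')) :=
  (Primrec.const _).pair <| Primrec.list_append.comp
    ((primrec_relabel _).comp .fst) ((primrec_relabel _).comp .snd)

theorem presProj_coprodPresentation_of_lt [Subsingleton (PresentedGroup (wordRelators L))] {i : ℕ}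
    (hi : i < m) : presProj (coprodPresentation L L') (FreeGroup.of i) = 1 :=
  presProj_of_eq_one (e := Fin.val) (List.subset_append_left _ _) ⟨i, hi⟩

theorem presProj_coprodPresentation_of_le [Subsingleton (PresentedGroup (wordRelators L'))] {i : ℕ}
    (hi : m ≤ i) (hi' : i < m + m') :
    presProj (coprodPresentation L L') (FreeGroup.of i) = 1 := by
  have h_one := presProj_of_eq_one (P := coprodPresentation L L')
    (e := fun i : Fin m' => m + i.val) (List.subset_append_right _ _) ⟨i - m, by omega⟩
  rwa [Nat.add_sub_cancel' hi] at h_one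

theorem nontrivial_presGroup_coprodPresentation
    (h : Nontrivial (PresentedGroup (wordRelators L)) ∨
      Nontrivial (PresentedGroup (wordRelators L'))) :
    Nontrivial (presGroup (coprodPresentation L L')) := by
  have h_disjoint : Disjoint (Set.range (Fin.val : Fin m → ℕ))
      (Set.range fun i : Fin m' => m + i.val) := by
    rw [Set.disjoint_left]
    rintro _ ⟨i, rfl⟩ ⟨j, hj⟩
    dsimp only at hj
    omega
  have mem_or {w : List (ℕ × Bool)} (hw : w ∈ (coprodPresentation L L').2) :
      w ∈ relabel Fin.val L ∨ w ∈ relabel (fun i => m + i.val) L' := List.mem_append.1 hw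
  obtain _ | _ := h
  · exact nontrivial_presGroup Fin.val_injective (fun i => i.2.trans_le le_self_add) fun w hw =>
      (mem_or hw).imp_right fun h x hx => h_disjoint.notMem_of_mem_right
        (mem_range_of_mem_relabel h hx)
  · exact nontrivial_presGroup (fun i j h => Fin.ext (Nat.add_left_cancel h))
      (fun i => Nat.add_lt_add_left i.2 m) fun w hw => (mem_or hw).symm.imp_right fun h x hx =>
        h_disjoint.notMem_of_mem_left (mem_range_of_mem_relabel h hx)

end coprodPresentation

/-- The predicate that the `n`-th partial recursive function takes the value `b` at `n`. -/
def DiagonalEq (b n : ℕ) : Prop := b ∈ (Denumerable.ofNat Nat.Partrec.Code n).eval n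

theorem rePred_diagonalEq (b : ℕ) : REPred (DiagonalEq b) := by
  have h_eval : Partrec fun n => (Denumerable.ofNat Nat.Partrec.Code n).eval n :=
    Nat.Partrec.Code.eval_part.comp (.ofNat _) .id
  have h_eq : REPred fun x : ℕ × ℕ => x.2 = b :=
    (Primrec.eq.comp .snd (.const b)).computablePred.to_re
  have h_bind : Partrec fun n => ((Denumerable.ofNat Nat.Partrec.Code n).eval n).bind fun y =>
      Part.assert (y = b) fun _ => Part.some () := h_eval.bind h_eq
  exact h_bind.dom_re.of_eq fun n => by simp [DiagonalEq, Part.dom_iff_mem]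

theorem DiagonalEq.not_of_ne {b c n : ℕ} (hb : DiagonalEq b n) (h : b ≠ c) : ¬DiagonalEq c n :=
  fun hc => h (Part.mem_unique hb hc)

theorem exists_diagonalEq {d : ℕ → ℕ} (hd : Computable d) : ∃ n, DiagonalEq (d n) n := by
  obtain ⟨c, hc⟩ := Nat.Partrec.Code.exists_code.1 (Partrec.nat_iff.1 hd.partrec)
  refine ⟨Encodable.encode c, ?_⟩
  rw [DiagonalEq, Denumerable.ofNat_encode, hc]
  exact Part.mem_some _

/-- (Chiodo) There is no general procedure to pick a non-trivial generator from a
finite presentation of a non-trivial group. -/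
theorem no_algorithm_picking_nontrivial_generator :
    ¬ ∃ g : ℕ × List (List (ℕ × Bool)) → ℕ, Computable g ∧
      ∀ P : ℕ × List (List (ℕ × Bool)), Nontrivial (presGroup P) →
        g P < P.1 ∧ presProj P (FreeGroup.of (g P)) ≠ 1 := by
  rintro ⟨g, hg, g_spec⟩
  obtain ⟨m, W, hW, W_nontrivial⟩ :=
    exists_primrec_presentation_nontrivial_iff_not (rePred_diagonalEq 0)
  obtain ⟨m', W', hW', W'_nontrivial⟩ :=
    exists_primrec_presentation_nontrivial_iff_not (rePred_diagonalEq 1)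
  let P (n : ℕ) := coprodPresentation (W n) (W' n)
  have hd : Computable fun n => if g (P n) < m then 0 else 1 :=
    (Primrec.ite (Primrec.nat_lt.comp .id (.const m)) (.const 0) (.const 1)).to_comp.comp
      (hg.comp (primrec₂_coprodPresentation.comp hW hW').to_comp)
  obtain ⟨n, hn⟩ := exists_diagonalEq hd
  have P_nontrivial : Nontrivial (presGroup (P n)) := by
    refine nontrivial_presGroup_coprodPresentation ?_
    rw [W_nontrivial, W'_nontrivial, ← not_and_or]
    exact fun ⟨h₀, h₁⟩ => h₀.not_of_ne zero_ne_one h₁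
  obtain ⟨g_lt, g_ne_one⟩ := g_spec (P n) P_nontrivial
  split_ifs at hn with h
  · have := not_nontrivial_iff_subsingleton.1 fun h => (W_nontrivial n).1 h hn
    exact g_ne_one (presProj_coprodPresentation_of_lt h)
  · have := not_nontrivial_iff_subsingleton.1 fun h => (W'_nontrivial n).1 h hn
    exact g_ne_one (presProj_coprodPresentation_of_le (not_lt.1 h) g_lt)
end
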